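/- arXiv:2206.04842 — 6 statements merged into one kernel-verified Lean document; each statement's English description precedes it below -/
import Mathlib

section
/- Let a ≥ 1 and let d be a positive integer with ⌈d/a⌉ ≥ 12, and let n be a positive integer with 1 ≤ ⌈n/a⌉ ≤ 5⌈d/a⌉. If d ≢ −3 (mod a), then q_d^{(a)}(n) ≥ Q_d^{(a,-)}(n). If d ≡ −3 (mod a), then q_d^{(a)}(n) ≥ Q_d^{(a,-)}(n) provided n ≠ d + 3 + a. -/
/-- `q_d^{(a)}(n)`: the number of partitions of `n` into parts of size at least `a`
such that successive parts differ by at least `d`. -/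
noncomputable def gapCount (d a n : ℕ) : ℕ :=
  Nat.card {p : n.Partition //
    (∀ x ∈ p.parts, a ≤ x) ∧
    List.Chain' (fun x y => x + d ≤ y) (p.parts.sort (· ≤ ·))}

/-- `Q_d^{(a)}(n)`: the number of partitions of `n` into parts congruent to `a` or `-a`
modulo `d + 3`. -/
noncomputable def congCount (d a n : ℕ) : ℕ :=
  Nat.card {p : n.Partition //
    ∀ x ∈ p.parts, x ≡ a [MOD d + 3] ∨ x + a ≡ 0 [MOD d + 3]}

/-- `Q_d^{(a,-)}(n)`: as `congCount`, but no part equals `d + 3 - a`. -/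
noncomputable def congMinusCount (d a n : ℕ) : ℕ :=
  Nat.card {p : n.Partition //
    (∀ x ∈ p.parts, x ≡ a [MOD d + 3] ∨ x + a ≡ 0 [MOD d + 3]) ∧
    ∀ x ∈ p.parts, x ≠ d + 3 - a}

/-- `Q_d^{(a,-,-)}(n)`: as `congCount`, but no part equals `a` or `d + 3 - a`. -/
noncomputable def congMinusMinusCount (d a n : ℕ) : ℕ :=
  Nat.card {p : n.Partition //
    (∀ x ∈ p.parts, x ≡ a [MOD d + 3] ∨ x + a ≡ 0 [MOD d + 3]) ∧
    (∀ x ∈ p.parts, x ≠ a) ∧ ∀ x ∈ p.parts, x ≠ d + 3 - a}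

/-- `ρ(R; n)`: the number of partitions of `n` all of whose parts lie in `R`. -/
noncomputable def rhoCount (R : Set ℕ) (n : ℕ) : ℕ :=
  Nat.card {p : n.Partition // ∀ x ∈ p.parts, x ∈ R}

/-- `h_n^{(a)}`: the least nonnegative residue of `-n` modulo `a`,
so that `n + negRes n a = a * ⌈n/a⌉`. -/
def negRes (n a : ℕ) : ℕ := (a - n % a) % a

/-- `⌈d/a⌉` for natural numbers. -/
def cdiv (d a : ℕ) : ℕ := (d + a - 1) / a

/-!
Write m = d + 3. A part of a partition counted by `congMinusCount` is a, k m + a with k ≥ 1, or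
k m - a with k ≥ 2, and each of the last two kinds is at least k (m - a / 2). So if
n < (N + 1) (m - a / 2), the multipliers k form two partitions of total size at most N; the second
one has no part 1, so padding it with ones turns the pair into a bipartition of N without loss.
The number of parts a is then determined by n, and there are at most as many partitions as
bipartitions of N. For N ≤ 5 these are so few that the partitions with gaps at least d having one
part, two parts, or three parts with least part a already suffice, unless n < d + 2 a. In that range
only a + ⋯ + a and the single part d + 3 + a can occur, and both occur only in the excluded case.
-/

open Finset

/-- The partitions of `N` into parts at most `k`, as multisets, given recursively so that their
number can be computed: `j` is the multiplicity of the part `k + 1`. -/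
def partitionsLE : ℕ → ℕ → Finset (Multiset ℕ)
  | 0, N => if N = 0 then {0} else ∅
  | k + 1, N => (range (N / (k + 1) + 1)).biUnion fun j =>
      (partitionsLE k (N - j * (k + 1))).image (Multiset.replicate j (k + 1) + ·)

theorem mem_partitionsLE {k N : ℕ} {s : Multiset ℕ} :
    s ∈ partitionsLE k N ↔ (∀ x ∈ s, 1 ≤ x ∧ x ≤ k) ∧ s.sum = N := by
  induction k generalizing N s with
  | zero =>
    have hzero : (∀ x ∈ s, 1 ≤ x ∧ x ≤ 0) ↔ s = 0 := by
      rw [Multiset.eq_zero_iff_forall_notMem]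
      exact forall₂_congr fun x _ => iff_false_intro (by omega)
    rw [partitionsLE, hzero]
    split_ifs <;> aesop
  | succ k ih =>
    simp only [partitionsLE, mem_biUnion, mem_range, Nat.lt_succ_iff, mem_image, ih,
      Nat.le_div_iff_mul_le (Nat.add_one_pos k)]
    constructor
    · rintro ⟨j, hj, t, ⟨ht, hsum⟩, rfl⟩
      refine ⟨fun x hx => ?_, ?_⟩
      · rcases Multiset.mem_add.1 hx with hx | hx
        · simp [Multiset.eq_of_mem_replicate hx]
        · exact ⟨(ht x hx).1, (ht x hx).2.trans k.le_succ⟩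
      · rw [Multiset.sum_add, Multiset.sum_replicate, smul_eq_mul, hsum, Nat.add_sub_of_le hj]
    · rintro ⟨hs, rfl⟩
      have hsplit := Multiset.filter_add_not (· = k + 1) s
      rw [Multiset.filter_eq'] at hsplit
      have hsum := congrArg Multiset.sum hsplit
      rw [Multiset.sum_add, Multiset.sum_replicate, smul_eq_mul] at hsum
      refine ⟨s.count (k + 1), by omega, _, ⟨fun x hx => ?_, by omega⟩, hsplit⟩
      obtain ⟨hxs, hne⟩ := Multiset.mem_filter.1 hx
      have := hs x hxs
      omega

/-- The bipartitions of `N`: pairs of partitions of total size `N`. -/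
def bipartitions (N : ℕ) : Finset (Multiset ℕ × Multiset ℕ) :=
  (antidiagonal N).biUnion fun ij => partitionsLE ij.1 ij.1 ×ˢ partitionsLE ij.2 ij.2

theorem mem_bipartitions {N : ℕ} {P M : Multiset ℕ} :
    (P, M) ∈ bipartitions N ↔ 0 ∉ P ∧ 0 ∉ M ∧ P.sum + M.sum = N := by
  have parts_bounds (s : Multiset ℕ) : (∀ x ∈ s, 1 ≤ x ∧ x ≤ s.sum) ↔ 0 ∉ s :=
    ⟨fun h h0 => absurd (h 0 h0).1 (by omega), fun h x hx =>
      ⟨Nat.pos_of_ne_zero fun hx0 => h (hx0 ▸ hx), Multiset.le_sum_of_mem hx⟩⟩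
  simp only [bipartitions, mem_biUnion, mem_product, mem_partitionsLE,
    HasAntidiagonal.mem_antidiagonal, Prod.exists, ← parts_bounds]
  constructor
  · rintro ⟨i, j, hij, ⟨hP, rfl⟩, hM, rfl⟩
    exact ⟨hP, hM, hij⟩
  · rintro ⟨hP, hM, hsum⟩
    exact ⟨_, _, hsum, ⟨hP, rfl⟩, hM, rfl⟩

theorem card_bipartitions (N : Fin 6) : #(bipartitions N) = ![1, 2, 5, 10, 20, 36] N := by
  decide +revert +kernel

/-- The partitions counted by `congMinusCount d a n`. -/
def congMinusPartitions (d a n : ℕ) : Set n.Partition :=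
  {p | (∀ x ∈ p.parts, x ≡ a [MOD d + 3] ∨ x + a ≡ 0 [MOD d + 3]) ∧
    ∀ x ∈ p.parts, x ≠ d + 3 - a}

theorem ncard_congMinusPartitions (d a n : ℕ) :
    (congMinusPartitions d a n).ncard = congMinusCount d a n :=
  rfl

theorem eq_or_eq_mul_add_or_eq_mul_sub_of_modEq {m a x : ℕ} (ham : a < m) (hx : 0 < x)
    (hmod : x ≡ a [MOD m] ∨ x + a ≡ 0 [MOD m]) (hne : x ≠ m - a) :
    x = a ∨ (∃ k, 1 ≤ k ∧ x = k * m + a) ∨ ∃ k, 2 ≤ k ∧ x = k * m - a := by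
  rcases hmod with hmod | hmod
  · have hdiv : x / m * m + a = x := by
      rw [← Nat.mod_eq_of_lt ham, ← hmod, Nat.div_add_mod']
    rcases Nat.eq_zero_or_pos (x / m) with h0 | hpos
    · left
      simpa [h0] using hdiv.symm
    · exact Or.inr (Or.inl ⟨x / m, hpos, hdiv.symm⟩)
  · obtain ⟨k, hk⟩ := Nat.modEq_zero_iff_dvd.1 hmod
    rw [mul_comm] at hk
    refine Or.inr (Or.inr ⟨k, ?_, by omega⟩)
    by_contra! hk2
    interval_cases k <;> omega

/-- The parts `k * m + a` for `k ∈ P` together with the parts `k * m - a` for `k ∈ M`, encoding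
the parts near nonzero multiples of `m` by their multipliers. The subtraction does not truncate
in the intended case, `a < m` and `0 ∉ M`. -/
def liftParts (m a : ℕ) (P M : Multiset ℕ) : Multiset ℕ :=
  P.map (fun k => k * m + a) + M.map (fun k => k * m - a)

theorem exists_eq_replicate_add_liftParts {m a : ℕ} (ham : a < m) (s : Multiset ℕ)
    (hpos : ∀ x ∈ s, 0 < x) (hmod : ∀ x ∈ s, x ≡ a [MOD m] ∨ x + a ≡ 0 [MOD m])
    (hne : ∀ x ∈ s, x ≠ m - a) :
    ∃ (A : ℕ) (P M : Multiset ℕ), (∀ k ∈ P, 1 ≤ k) ∧ (∀ k ∈ M, 2 ≤ k) ∧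
      s = Multiset.replicate A a + liftParts m a P M := by
  induction s using Multiset.induction_on with
  | empty => exact ⟨0, 0, 0, by simp, by simp, by simp [liftParts]⟩
  | cons x s ih =>
    simp only [Multiset.forall_mem_cons] at hpos hmod hne
    obtain ⟨A, P, M, hP, hM, rfl⟩ := ih hpos.2 hmod.2 hne.2
    rcases eq_or_eq_mul_add_or_eq_mul_sub_of_modEq ham hpos.1 hmod.1 hne.1 with
      rfl | ⟨k, hk, rfl⟩ | ⟨k, hk, rfl⟩
    · exact ⟨A + 1, P, M, hP, hM, by simp [Multiset.replicate_succ]⟩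
    · exact ⟨A, k ::ₘ P, M, by simpa using ⟨hk, hP⟩, hM, by simp [liftParts]⟩
    · exact ⟨A, P, k ::ₘ M, hP, by simpa using ⟨hk, hM⟩, by simp [liftParts]⟩

theorem sum_mul_le_two_mul_sum_liftParts (m a : ℕ) {P M : Multiset ℕ} (hM : ∀ k ∈ M, 2 ≤ k) :
    (P.sum + M.sum) * (2 * m - a) ≤ 2 * (liftParts m a P M).sum := by
  have hP_le : (P.map fun k => k * (2 * m - a)).sum ≤ (P.map fun k => 2 * (k * m + a)).sum := by
    refine Multiset.sum_map_le_sum_map _ _ fun k _ => ?_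
    calc k * (2 * m - a) ≤ k * (2 * m) := Nat.mul_le_mul_left k (Nat.sub_le _ _)
      _ ≤ 2 * (k * m + a) := by linarith
  have hM_le : (M.map fun k => k * (2 * m - a)).sum ≤ (M.map fun k => 2 * (k * m - a)).sum := by
    refine Multiset.sum_map_le_sum_map _ _ fun k hk => ?_
    calc k * (2 * m - a) = 2 * (k * m) - k * a := by rw [Nat.mul_sub]; ring_nf
      _ ≤ 2 * (k * m) - 2 * a := Nat.sub_le_sub_left (Nat.mul_le_mul_right a (hM k hk)) _
      _ = 2 * (k * m - a) := (Nat.mul_sub ..).symm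
  simp only [Multiset.sum_map_mul_left, Multiset.sum_map_mul_right, Multiset.map_id'] at hP_le hM_le
  rw [liftParts, Multiset.sum_add, add_mul, mul_add]
  exact add_le_add hP_le hM_le

/-- The bipartition of `N` obtained from `(P, M)` by adding parts `1` to `M`. When `M` has no part
`1` of its own, the padding can be undone. -/
def padOnes (N : ℕ) (P M : Multiset ℕ) : Multiset ℕ × Multiset ℕ :=
  (P, M + Multiset.replicate (N - (P.sum + M.sum)) 1)

theorem padOnes_mem_bipartitions {N : ℕ} {P M : Multiset ℕ} (hP : 0 ∉ P) (hM : 0 ∉ M)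
    (hN : P.sum + M.sum ≤ N) : padOnes N P M ∈ bipartitions N := by
  refine mem_bipartitions.2 ⟨hP, ?_, ?_⟩
  · simpa [Multiset.mem_replicate] using hM
  · rw [Multiset.sum_add, Multiset.sum_replicate, smul_eq_mul, mul_one, ← add_assoc,
      Nat.add_sub_of_le hN]

theorem padOnes_inj {N : ℕ} {P M P' M' : Multiset ℕ} (hM : 1 ∉ M) (hM' : 1 ∉ M') :
    padOnes N P M = padOnes N P' M' ↔ P = P' ∧ M = M' := by
  have filter_snd {Q L : Multiset ℕ} (hL : 1 ∉ L) : (padOnes N Q L).2.filter (· ≠ 1) = L := by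
    rw [padOnes, Multiset.filter_add,
      Multiset.filter_eq_self.2 fun k hk => ne_of_mem_of_not_mem hk hL,
      Multiset.filter_eq_nil.2 fun k hk => not_not.2 (Multiset.eq_of_mem_replicate hk), add_zero]
  refine ⟨fun h => ⟨congrArg Prod.fst h, ?_⟩, fun ⟨hP, hMM⟩ => hP ▸ hMM ▸ rfl⟩
  rw [← filter_snd hM, h, filter_snd hM']

theorem congMinusCount_le_card_bipartitions {d a n N : ℕ} (ha : 1 ≤ a) (had : a < d + 3)
    (hn : 2 * n < (N + 1) * (2 * (d + 3) - a)) :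
    congMinusCount d a n ≤ #(bipartitions N) := by
  have exists_decomp (p : congMinusPartitions d a n) :=
    exists_eq_replicate_add_liftParts had p.1.parts (fun _ => p.1.parts_pos) p.2.1 p.2.2
  choose A P M hP hM hparts using exists_decomp
  have sum_eq (p) : A p * a + (liftParts (d + 3) a (P p) (M p)).sum = n := by
    simpa [hparts p] using p.1.parts_sum
  have level_le (p) : (P p).sum + (M p).sum ≤ N := by
    refine Nat.lt_succ_iff.1 (lt_of_mul_lt_mul_right (lt_of_le_of_lt ?_ hn) (Nat.zero_le _))
    calc ((P p).sum + (M p).sum) * (2 * (d + 3) - a)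
        ≤ 2 * (liftParts (d + 3) a (P p) (M p)).sum :=
          sum_mul_le_two_mul_sum_liftParts (d + 3) a (hM p)
      _ ≤ 2 * n := Nat.mul_le_mul_left 2 (le_of_add_le_right (sum_eq p).le)
  have not_mem {k j : ℕ} {s : Multiset ℕ} (hs : ∀ x ∈ s, k ≤ x) (hj : j < k) : j ∉ s :=
    fun h => (hs j h).not_gt hj
  let f (p : congMinusPartitions d a n) : bipartitions N :=
    ⟨padOnes N (P p) (M p), padOnes_mem_bipartitions (not_mem (hP p) one_pos)
      (not_mem (hM p) two_pos) (level_le p)⟩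
  have f_inj : Function.Injective f := by
    intro p q hpq
    obtain ⟨hPeq, hMeq⟩ := (padOnes_inj (not_mem (hM p) one_lt_two)
      (not_mem (hM q) one_lt_two)).1 (congrArg Subtype.val hpq)
    have hAeq : A p = A q := by
      have hp := sum_eq p
      rw [hPeq, hMeq, ← sum_eq q] at hp
      exact Nat.eq_of_mul_eq_mul_right ha (Nat.add_right_cancel hp)
    exact Subtype.ext (Nat.Partition.ext (by rw [hparts p, hparts q, hAeq, hPeq, hMeq]))
  simpa [ncard_congMinusPartitions] using Nat.card_le_card_of_injective f f_inj

section SmallCases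

variable {d a n : ℕ}

theorem le_of_mem_congMinusPartitions (had : a < d + 3) {p : n.Partition}
    (hp : p ∈ congMinusPartitions d a n) {x : ℕ} (hx : x ∈ p.parts) : a ≤ x := by
  rcases eq_or_eq_mul_add_or_eq_mul_sub_of_modEq had (p.parts_pos hx) (hp.1 x hx) (hp.2 x hx) with
    rfl | ⟨k, -, rfl⟩ | ⟨k, hk, rfl⟩
  · rfl
  · exact Nat.le_add_left ..
  · have := Nat.mul_le_mul_right (d + 3) hk
    omega

theorem congMinusCount_eq_zero (had : a < d + 3) (hn : 1 ≤ n) (hna : n < a) :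
    congMinusCount d a n = 0 := by
  rw [← ncard_congMinusPartitions, Set.ncard_eq_zero, Set.eq_empty_iff_forall_notMem]
  intro p hp
  have hne : p.parts ≠ 0 := fun h => by
    have := p.parts_sum
    simp only [h, Multiset.sum_zero] at this
    omega
  obtain ⟨x, hx⟩ := Multiset.exists_mem_of_ne_zero hne
  have := le_of_mem_congMinusPartitions had hp hx
  have := p.le_of_mem_parts hx
  omega

theorem eq_or_eq_add_of_mem_congMinusPartitions (had : a < d + 3) (hn : n < 2 * (d + 3) - a)
    {p : n.Partition} (hp : p ∈ congMinusPartitions d a n) {x : ℕ} (hx : x ∈ p.parts) :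
    x = a ∨ x = d + 3 + a := by
  have hxn := p.le_of_mem_parts hx
  rcases eq_or_eq_mul_add_or_eq_mul_sub_of_modEq had (p.parts_pos hx) (hp.1 x hx) (hp.2 x hx) with
    rfl | ⟨k, hk, rfl⟩ | ⟨k, hk, rfl⟩
  · exact Or.inl rfl
  · obtain rfl : k = 1 := by
      refine le_antisymm (Nat.le_of_lt_succ ?_) hk
      exact lt_of_mul_lt_mul_right (a := d + 3) (by omega) (Nat.zero_le _)
    exact Or.inr (by omega)
  · have := Nat.mul_le_mul_right (d + 3) hk
    omega

theorem parts_of_mem_congMinusPartitions (ha : 1 ≤ a) (had : 3 * a ≤ d + 6) (hn : n < d + 2 * a)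
    {p : n.Partition} (hp : p ∈ congMinusPartitions d a n) :
    p.parts = Multiset.replicate (n / a) a ∨ n = d + 3 + a ∧ p.parts = {n} := by
  have hparts {x : ℕ} := eq_or_eq_add_of_mem_congMinusPartitions (x := x)
    (by omega) (by omega) hp
  by_cases hmem : d + 3 + a ∈ p.parts
  · right
    obtain ⟨t, ht⟩ := Multiset.exists_cons_of_mem hmem
    have hsum : d + 3 + a + t.sum = n := by simpa [ht] using p.parts_sum
    have ht0 : t = 0 := by
      refine Multiset.eq_zero_of_forall_notMem fun x hx => ?_
      have hxt : x ≤ t.sum := Multiset.le_sum_of_mem hx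
      rcases hparts (ht ▸ Multiset.mem_cons_of_mem hx) with h | h <;> omega
    obtain rfl : n = d + 3 + a := by simpa [ht0] using hsum.symm
    exact ⟨rfl, by rw [ht, ht0]; rfl⟩
  · left
    have hrep : p.parts = Multiset.replicate p.parts.card a := by
      refine Multiset.eq_replicate_card.2 fun x hx => (hparts hx).resolve_right ?_
      rintro rfl
      exact hmem hx
    have hsum : p.parts.card * a = n := by
      rw [← smul_eq_mul, ← Multiset.sum_replicate, ← hrep, p.parts_sum]
    rwa [Nat.div_eq_of_eq_mul_left ha hsum.symm]

theorem congMinusCount_le_one (ha : 1 ≤ a) (had : 3 * a ≤ d + 6) (hn : n < d + 2 * a)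
    (hne : a ∣ d + 3 → n ≠ d + 3 + a) : congMinusCount d a n ≤ 1 := by
  rw [← ncard_congMinusPartitions, Set.ncard_le_one_iff]
  have not_replicate {p : n.Partition} (hn : n = d + 3 + a) :
      p.parts ≠ Multiset.replicate (n / a) a := fun hp => by
    have hdvd : a ∣ n := by
      rw [← p.parts_sum, hp, Multiset.sum_replicate]
      exact Dvd.intro_left _ rfl
    exact hne ((Nat.dvd_add_left dvd_rfl).1 (hn ▸ hdvd)) hn
  intro p q hp hq
  rcases parts_of_mem_congMinusPartitions ha had hn hp with hp | ⟨hn', hp⟩ <;>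
    rcases parts_of_mem_congMinusPartitions ha had hn hq with hq | ⟨hn', hq⟩
  · exact Nat.Partition.ext (hp.trans hq.symm)
  · exact (not_replicate hn' hp).elim
  · exact (not_replicate hn' hq).elim
  · exact Nat.Partition.ext (hp.trans hq.symm)

end SmallCases

/-- The partitions counted by `gapCount d a n`. -/
def gapPartitions (d a n : ℕ) : Set n.Partition :=
  {p | (∀ x ∈ p.parts, a ≤ x) ∧ (p.parts.sort (· ≤ ·)).IsChain fun x y => x + d ≤ y}

theorem ncard_gapPartitions (d a n : ℕ) : (gapPartitions d a n).ncard = gapCount d a n :=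
  rfl

theorem card_le_gapCount {d a n : ℕ} (ha : 1 ≤ a) (S : Finset (List ℕ))
    (hS : ∀ l ∈ S, l.sum = n ∧ (∀ x ∈ l, a ≤ x) ∧ l.IsChain fun x y => x + d ≤ y) :
    #S ≤ gapCount d a n := by
  have hsub : (S : Set (List ℕ)) ⊆
      (fun p : n.Partition => p.parts.sort (· ≤ ·)) '' gapPartitions d a n := by
    intro l hl
    obtain ⟨hsum, hle, hchain⟩ := hS l hl
    have hsorted : (l : Multiset ℕ).sort (· ≤ ·) = l := by
      rw [Multiset.coe_sort]
      refine List.mergeSort_eq_self _ ?_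
      exact List.isChain_iff_pairwise.1 (hchain.imp fun x y h => le_of_add_le_left h)
    let p : n.Partition := ⟨l, fun hi => ha.trans (hle _ (Multiset.mem_coe.1 hi)), by simpa⟩
    exact ⟨p, ⟨hle, hsorted.symm ▸ hchain⟩, hsorted⟩
  rw [← ncard_gapPartitions, ← Set.ncard_coe_finset]
  exact (Set.ncard_le_ncard hsub).trans Set.ncard_image_le

theorem card_Icc_add_card_Icc_le_gapCount {d a n : ℕ} (ha : 1 ≤ a) (han : a ≤ n) :
    1 + #(Icc a ((n - d) / 2)) + #(Icc (a + d) ((n - a - d) / 2)) ≤ gapCount d a n := by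
  let S₁ : Finset (List ℕ) := {[n]}
  let S₂ : Finset (List ℕ) := (Icc a ((n - d) / 2)).image fun x => [x, n - x]
  let S₃ : Finset (List ℕ) := (Icc (a + d) ((n - a - d) / 2)).image fun y => [a, y, n - a - y]
  have hcard : #(S₁ ∪ S₂ ∪ S₃) =
      1 + #(Icc a ((n - d) / 2)) + #(Icc (a + d) ((n - a - d) / 2)) := by
    rw [card_union_of_disjoint, card_union_of_disjoint, card_singleton,
      card_image_of_injective, card_image_of_injective]
    · exact fun x y h => (List.cons.inj (List.cons.inj h).2).1
    · exact fun x y h => (List.cons.inj h).1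
    · simp [S₁, S₂]
    · grind [disjoint_left]
  rw [← hcard]
  refine card_le_gapCount ha _ fun l hl => ?_
  simp only [S₁, S₂, S₃, mem_union, mem_singleton, mem_image, mem_Icc] at hl
  rcases hl with (rfl | ⟨x, hx, rfl⟩) | ⟨y, hy, rfl⟩
  · simpa using han
  · simp only [List.sum_cons, List.sum_nil, add_zero, List.mem_cons, List.not_mem_nil, or_false,
      forall_eq_or_imp, forall_eq, List.isChain_cons_cons, List.IsChain.singleton, and_true]
    omega
  · simp only [List.sum_cons, List.sum_nil, add_zero, List.mem_cons, List.not_mem_nil, or_false,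
      forall_eq_or_imp, forall_eq, List.isChain_cons_cons, List.IsChain.singleton, and_true]
    omega

theorem cdiv_le_iff {a b k : ℕ} (ha : 1 ≤ a) : cdiv b a ≤ k ↔ b ≤ a * k :=
  ceilDiv_le_iff_le_mul ha

theorem lt_cdiv_iff {a b k : ℕ} (ha : 1 ≤ a) : k < cdiv b a ↔ a * k < b := by
  rw [← not_le, cdiv_le_iff ha, not_le]

theorem le_mul_of_cdiv_le_mul_cdiv {a b c k : ℕ} (ha : 1 ≤ a) (h : cdiv b a ≤ k * cdiv c a) :
    b ≤ k * (c + a - 1) :=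
  calc b ≤ a * (k * cdiv c a) := (cdiv_le_iff ha).1 h
    _ = k * (a * cdiv c a) := mul_left_comm ..
    _ ≤ k * (c + a - 1) := Nat.mul_le_mul_left k (Nat.mul_div_le _ _)

theorem card_bipartitions_le_card_Icc {a d n N : ℕ} (ha : 1 ≤ a) (hd : 3 * a + 5 ≤ d)
    (hn : d + 2 * a ≤ n) (hN : N < 6) (hle : N * (2 * (d + 3) - a) ≤ 2 * n) :
    #(bipartitions N) ≤ 1 + #(Icc a ((n - d) / 2)) + #(Icc (a + d) ((n - a - d) / 2)) := by
  rw [card_bipartitions ⟨N, hN⟩, Nat.card_Icc, Nat.card_Icc]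
  interval_cases N <;> dsimp <;> omega

theorem stmt5_general {a d n : ℕ} (ha : 1 ≤ a) (hd : 3 * a + 5 ≤ d) (hn : 1 ≤ n)
    (hn6 : n + 3 * a < 6 * (d + 3)) (hne : a ∣ d + 3 → n ≠ d + 3 + a) :
    congMinusCount d a n ≤ gapCount d a n := by
  rcases lt_or_ge n a with hna | han
  · rw [congMinusCount_eq_zero (by omega) hn hna]
    exact Nat.zero_le _
  refine le_trans ?_ (card_Icc_add_card_Icc_le_gapCount ha han)
  rcases lt_or_ge n (d + 2 * a) with hsmall | hlarge
  · exact (congMinusCount_le_one ha (by omega) hsmall hne).trans (by omega)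
  obtain ⟨N, hN, hle, hlt⟩ : ∃ N < 6, N * (2 * (d + 3) - a) ≤ 2 * n ∧
      2 * n < (N + 1) * (2 * (d + 3) - a) :=
    ⟨2 * n / (2 * (d + 3) - a), (Nat.div_lt_iff_lt_mul (by omega)).2 (by omega),
      Nat.div_mul_le_self _ _, Nat.lt_mul_of_div_lt (Nat.lt_succ_self _) (by omega)⟩
  exact (congMinusCount_le_card_bipartitions ha (by omega) hlt).trans
    (card_bipartitions_le_card_Icc ha hd hlarge hN hle)

theorem stmt5 (a d n : ℕ) (ha : 1 ≤ a) (hd : 1 ≤ d) (hceil : 12 ≤ cdiv d a)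
    (hn : 1 ≤ n) (hn2 : cdiv n a ≤ 5 * cdiv d a) :
    (¬ a ∣ d + 3 → congMinusCount d a n ≤ gapCount d a n) ∧
    (a ∣ d + 3 → n ≠ d + 3 + a → congMinusCount d a n ≤ gapCount d a n) := by
  have hd' : a * 11 < d := (lt_cdiv_iff ha).1 hceil
  have hn' : n ≤ 5 * (d + a - 1) := le_mul_of_cdiv_le_mul_cdiv ha hn2
  exact ⟨fun h => stmt5_general ha (by omega) hn (by omega) fun h' => absurd h' h,
    fun _ h => stmt5_general ha (by omega) hn (by omega) fun _ => h⟩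
end

section
/- For all integers d with d = 31 or d ≥ 63, and all integers n ≥ d + 2, one has q_d^{(1)}(n) ≥ Q_{d−3}^{(1,-)}(n). -/
/-!
Let `N = 2 ^ r - 1`. Among the sequences with gaps at least `N`, those whose gaps also respect the
binary digits of the residues of their terms modulo `N` have a generating function satisfying a
system of `q`-difference equations. These force it to be the product of the factors
`1 + X ^ (2 ^ c + N * s)`, `c < r`, as in Andrews' generalization of Schur's theorem, and Euler's
argument turns the product into the generating function of the partitions into parts from `r`
residue classes modulo `2 * N`. So for every `n` there are at most as many of the latter as there
are partitions of `n` with gaps at least `N`.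

For `r = 5` this concerns gaps of `31` and the residues `1, 33, 35, 39, 47` modulo `62`. To pass
from `31` to `d`, scale by `31 / d`. On one side, multiplying the terms of a sequence with gaps of
`31` by `d / 31` and rounding down leaves gaps of `d`. On the other side, the parts
`k * d - 1, k * d + 1` with `k ≥ 2` of a partition of `n` shrink injectively to numbers below
`31 * k` in those residue classes, four parts `d + 1` shrink to one part `95`, and parts `1` fill
up the sum to `31 * n / d`.
-/

namespace GapPartition

open Finset PowerSeries

section GapSeqs

/-- The increasing sequences of length `t` with sum `n`, all terms at least `m` and consecutive
terms differing by at least `d`; these are the partitions counted by `gapCount`, read from the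
smallest part and sorted by their number of parts. -/
def gapSeqs (d : ℕ) : ℕ → ℕ → ℕ → Finset (List ℕ)
  | 0, _, n => if n = 0 then {[]} else ∅
  | t + 1, m, n => (Icc m n).biUnion fun a =>
      (gapSeqs d t (a + d) (n - a)).map ⟨List.cons a, List.cons_injective⟩

variable {c d t m m' n M : ℕ}

theorem card_gapSeqs_zero : #(gapSeqs d 0 m n) = if n = 0 then 1 else 0 := by
  unfold gapSeqs
  split_ifs <;> rfl

theorem card_gapSeqs_succ :
    #(gapSeqs d (t + 1) m n) = ∑ a ∈ Icc m n, #(gapSeqs d t (a + d) (n - a)) := by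
  rw [gapSeqs, card_biUnion]
  · simp only [card_map]
  · intro a _ b _ hab
    rw [Function.onFun, disjoint_left]
    simp only [mem_map, Function.Embedding.coeFn_mk]
    rintro _ ⟨l, -, rfl⟩ ⟨l', -, h⟩
    exact hab (List.cons.inj h).1.symm

theorem card_gapSeqs_one : #(gapSeqs d 1 m n) = if m ≤ n then 1 else 0 := by
  rw [card_gapSeqs_succ, sum_congr rfl fun a ha => card_gapSeqs_zero.trans
    (if_congr (show n - a = 0 ↔ a = n by grind) rfl rfl)]
  simp

theorem mem_gapSeqs {l : List ℕ} : l ∈ gapSeqs d t m n ↔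
    l.length = t ∧ l.sum = n ∧ (∀ x ∈ l, m ≤ x) ∧ l.IsChain fun x y => x + d ≤ y := by
  induction t generalizing m n l with
  | zero =>
    unfold gapSeqs
    split_ifs <;> grind
  | succ t ih =>
    cases l with
    | nil => simp [gapSeqs]
    | cons a l =>
      have : IsTrans ℕ fun x y => x + d ≤ y := ⟨fun x y z _ _ => by omega⟩
      have hchain : (a :: l).IsChain (fun x y => x + d ≤ y) ↔
          (∀ x ∈ l, a + d ≤ x) ∧ l.IsChain fun x y => x + d ≤ y := by
        simp only [List.isChain_iff_pairwise, List.pairwise_cons]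
      simp only [gapSeqs, mem_biUnion, mem_map, mem_Icc, Function.Embedding.coeFn_mk,
        List.cons.injEq, ih, hchain, List.length_cons, List.sum_cons, List.forall_mem_cons]
      constructor
      · rintro ⟨_, ⟨hma, han⟩, _, ⟨hlen, hsum, hle, hl⟩, rfl, rfl⟩
        exact ⟨by omega, by omega, ⟨hma, fun x hx => by have := hle x hx; omega⟩, hle, hl⟩
      · rintro ⟨hlen, hsum, ⟨hma, -⟩, hle, hl⟩
        exact ⟨a, ⟨hma, by omega⟩, l, ⟨by omega, by omega, hle, hl⟩, rfl, rfl⟩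

theorem sort_coe_eq_of_isChain {l : List ℕ} (hl : l.IsChain fun x y => x + d ≤ y) :
    (l : Multiset ℕ).sort (· ≤ ·) = l := by
  rw [Multiset.coe_sort]
  refine List.mergeSort_of_pairwise (le := fun a b => decide (a ≤ b)) ?_
  simpa using (hl.imp (S := (· ≤ ·)) fun a b h => by omega).pairwise

theorem sum_card_gapSeqs_le_gapCount (hm : 0 < m) (T : Finset ℕ) :
    ∑ t ∈ T, #(gapSeqs d t m n) ≤ gapCount d m n := by
  rw [← card_biUnion fun s _ t _ hst => disjoint_left.2 fun l hs ht =>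
    hst ((mem_gapSeqs.1 hs).1.symm.trans (mem_gapSeqs.1 ht).1),
    gapCount, ← Nat.card_eq_finsetCard]
  have spec (l : T.biUnion fun t => gapSeqs d t m n) :
      l.1.sum = n ∧ (∀ x ∈ l.1, m ≤ x) ∧ l.1.IsChain fun x y => x + d ≤ y := by
    obtain ⟨t, -, hl⟩ := mem_biUnion.1 l.2
    exact (mem_gapSeqs.1 hl).2
  refine Nat.card_le_card_of_injective
    (fun l => ⟨⟨l.1, fun hx => hm.trans_le ((spec l).2.1 _ hx), (spec l).1⟩, (spec l).2.1, ?_⟩) ?_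
  · rw [sort_coe_eq_of_isChain (spec l).2.2]
    exact (spec l).2.2
  · intro l l' h
    have hparts : (l.1 : Multiset ℕ) = l'.1 := congrArg (fun p => p.1.parts) h
    rw [Subtype.ext_iff, ← sort_coe_eq_of_isChain (spec l).2.2, hparts,
      sort_coe_eq_of_isChain (spec l').2.2]

/-- Rounding each term `a` down from `a * d / c` keeps gaps of `d`. -/
theorem card_gapSeqs_scale (hc : 0 < c) (hcd : c ≤ d) (hm : c * m' ≤ d * m) (hM : d * M ≤ c * n) :
    #(gapSeqs c (t + 1) m M) ≤ #(gapSeqs d (t + 1) m' n) := by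
  induction t generalizing m m' M n with
  | zero =>
    rw [card_gapSeqs_one, card_gapSeqs_one]
    split_ifs with hmM hmn
    · rfl
    · exact absurd (Nat.le_of_mul_le_mul_left (hm.trans ((Nat.mul_le_mul_left d hmM).trans hM)) hc)
        hmn
    all_goals omega
  | succ t ih =>
    rw [card_gapSeqs_succ, card_gapSeqs_succ]
    have hdiv (a : ℕ) : c * (a * d / c) ≤ d * a := by
      rw [mul_comm d]
      exact Nat.mul_div_le _ _
    have hmono : StrictMono fun a => a * d / c := strictMono_nat_of_lt_succ fun a => by
      rw [Nat.lt_iff_add_one_le, ← Nat.add_div_right _ hc]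
      exact Nat.div_le_div_right (by nlinarith)
    calc ∑ a ∈ Icc m M, #(gapSeqs c (t + 1) (a + c) (M - a))
        ≤ ∑ a ∈ Icc m M, #(gapSeqs d (t + 1) (a * d / c + d) (n - a * d / c)) := by
          refine sum_le_sum fun a _ => ih ?_ ?_
          · nlinarith [hdiv a]
          · rw [Nat.mul_sub, Nat.mul_sub]
            have := hdiv a
            omega
      _ = ∑ b ∈ (Icc m M).image (fun a => a * d / c), #(gapSeqs d (t + 1) (b + d) (n - b)) := by
          rw [sum_image hmono.injective.injOn]
      _ ≤ ∑ b ∈ Icc m' n, #(gapSeqs d (t + 1) (b + d) (n - b)) := by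
          refine sum_le_sum_of_subset (image_subset_iff.2 fun a ha => ?_)
          rw [mem_Icc] at ha ⊢
          exact ⟨(Nat.le_div_iff_mul_le hc).2 (by nlinarith),
            Nat.le_of_mul_le_mul_left ((hdiv a).trans ((Nat.mul_le_mul_left d ha.2).trans hM)) hc⟩

end GapSeqs

section CoeffOrder

/-- The coefficientwise order on power series. -/
noncomputable scoped instance coeffPartialOrder {R : Type*} [Semiring R] [PartialOrder R] :
    PartialOrder R⟦X⟧ :=
  PartialOrder.lift (fun f n => coeff n f) fun _ _ h => PowerSeries.ext fun n => congrFun h n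

variable {R : Type*}

theorem le_iff_forall_coeff_le [Semiring R] [PartialOrder R] {f g : R⟦X⟧} :
    f ≤ g ↔ ∀ n, coeff n f ≤ coeff n g :=
  Iff.rfl

scoped instance coeffIsOrderedRing [Ring R] [PartialOrder R] [IsOrderedRing R] :
    IsOrderedRing R⟦X⟧ where
  add_le_add_left f g h k := le_iff_forall_coeff_le.2 fun n => by
    simpa using le_iff_forall_coeff_le.1 h n
  zero_le_one := le_iff_forall_coeff_le.2 fun n => by
    rw [map_zero, coeff_one]
    split_ifs
    exacts [zero_le_one, le_rfl]
  mul_le_mul_of_nonneg_left f hf g h hgh := le_iff_forall_coeff_le.2 fun n => by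
    simp only [coeff_mul]
    exact sum_le_sum fun p _ => mul_le_mul_of_nonneg_left (hgh _) (hf _)
  mul_le_mul_of_nonneg_right f hf g h hgh := le_iff_forall_coeff_le.2 fun n => by
    simp only [coeff_mul]
    exact sum_le_sum fun p _ => mul_le_mul_of_nonneg_right (hgh _) (hf _)

theorem X_nonneg : 0 ≤ (X : ℤ⟦X⟧) := le_iff_forall_coeff_le.2 fun n => by
  rw [map_zero, coeff_X]
  split_ifs <;> simp

end CoeffOrder

section GeomSeries

/-- The geometric series `1 / (1 - X ^ i)`, with the value `1` at `i = 0`. -/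
noncomputable def geomSeries (i : ℕ) : ℤ⟦X⟧ := mk fun n => if i ∣ n then 1 else 0

variable {i n : ℕ}

theorem one_sub_X_pow_mul_geomSeries (hi : 0 < i) : (1 - X ^ i) * geomSeries i = 1 := by
  ext n
  rw [sub_mul, one_mul, map_sub, coeff_X_pow_mul', geomSeries, coeff_mk, coeff_mk, coeff_one]
  rcases Nat.lt_or_ge n i with hni | hin
  · have : i ∣ n ↔ n = 0 := ⟨fun h => Nat.eq_zero_of_dvd_of_lt h hni, fun h => h ▸ dvd_zero i⟩
    simp [hni.not_ge, this]
  · have : i ∣ n - i ↔ i ∣ n := by rw [← Nat.dvd_add_self_right, Nat.sub_add_cancel hin]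
    simp [hin, this, (hi.trans_le hin).ne']

theorem geomSeries_nonneg : 0 ≤ geomSeries i := le_iff_forall_coeff_le.2 fun n => by
  rw [geomSeries, coeff_mk, map_zero]
  split_ifs <;> simp

open scoped PowerSeries.WithPiTopology in
theorem coeff_prod_geomSeries (s : Finset ℕ) (n : ℕ) :
    coeff n (∏ i ∈ s, geomSeries i) = #(Nat.Partition.restricted n (· ∈ s)) := by
  have hgeom (i : ℕ) : ∑' j, (X : ℤ⟦X⟧) ^ ((i + 1) * j) = geomSeries (i + 1) := by
    simp only [pow_mul]
    calc ∑' j, ((X : ℤ⟦X⟧) ^ (i + 1)) ^ j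
        = (∑' j, (X ^ (i + 1)) ^ j) * (1 - X ^ (i + 1)) * geomSeries (i + 1) := by
          rw [mul_assoc, one_sub_X_pow_mul_geomSeries i.succ_pos, mul_one]
      _ = geomSeries (i + 1) := by
          rw [WithPiTopology.tsum_pow_mul_one_sub_of_constantCoeff_eq_zero (by simp), one_mul]
  have h := Nat.Partition.hasProd_powerSeriesMk_card_restricted ℤ (· ∈ s)
  simp only [hgeom] at h
  have hprod : HasProd (fun i => if i ∈ s then geomSeries i else 1) (∏ i ∈ s, geomSeries i) := by
    rw [← prod_congr rfl fun i hi => if_pos hi]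
    exact hasProd_prod_of_ne_finset_one fun i hi => if_neg hi
  have hzero : geomSeries 0 = 1 := by
    ext n
    simp [geomSeries, coeff_one]
  rw [← Nat.succ_injective.hasProd_iff] at hprod
  · rw [hprod.unique h, coeff_mk]
  · rintro (_ | i) hi
    · simp [hzero]
    · exact absurd ⟨i, rfl⟩ hi

end GeomSeries

section GapSeries

/-- The closed form of the generating function of `#(gapSeqs d t m n)`. -/
noncomputable def gapSeries (d t m : ℕ) : ℤ⟦X⟧ :=
  X ^ (m * t + d * t.choose 2) * ∏ i ∈ range t, geomSeries (i + 1)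

variable (d t : ℕ)

theorem gapSeries_succ_sub (m : ℕ) :
    gapSeries d (t + 1) m - gapSeries d (t + 1) (m + 1) = X ^ m * gapSeries d t (m + d) := by
  have hgeom := one_sub_X_pow_mul_geomSeries (i := t + 1) t.succ_pos
  have hchoose : (t + 1).choose 2 = t + t.choose 2 := by
    rw [Nat.choose_succ_succ' t 1, Nat.choose_one_right]
  have hright : (X : ℤ⟦X⟧) ^ ((m + 1) * (t + 1) + d * (t + t.choose 2)) =
      X ^ (m * (t + 1) + d * (t + t.choose 2)) * X ^ (t + 1) := by ring
  have hleft : (X : ℤ⟦X⟧) ^ (m * (t + 1) + d * (t + t.choose 2)) =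
      X ^ m * X ^ ((m + d) * t + d * t.choose 2) := by ring
  simp only [gapSeries, prod_range_succ, hchoose, hright, hleft]
  linear_combination (X ^ m * X ^ ((m + d) * t + d * t.choose 2) *
    ∏ i ∈ range t, geomSeries (i + 1)) * hgeom

theorem gapSeries_add (m k : ℕ) : gapSeries d t (m + k) = X ^ (k * t) * gapSeries d t m := by
  simp only [gapSeries]
  ring

theorem gapSeries_nonneg (m : ℕ) : 0 ≤ gapSeries d t m :=
  mul_nonneg (pow_nonneg X_nonneg _) (prod_nonneg fun _ _ => geomSeries_nonneg)

theorem gapSeries_antitone : Antitone (gapSeries d t) := by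
  refine antitone_nat_of_succ_le fun m => ?_
  cases t with
  | zero => simp [gapSeries]
  | succ t =>
    rw [← sub_nonneg, gapSeries_succ_sub]
    exact mul_nonneg (pow_nonneg X_nonneg _) (gapSeries_nonneg d t _)

theorem sum_Ico_gapSeries {m m' : ℕ} (h : m ≤ m') :
    ∑ a ∈ Ico m m', X ^ a * gapSeries d t (a + d) =
      gapSeries d (t + 1) m - gapSeries d (t + 1) m' := by
  have htelescope := sum_Ico_sub (gapSeries d (t + 1)) h
  rw [sum_sub_distrib] at htelescope
  simp only [← gapSeries_succ_sub, sum_sub_distrib]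
  linear_combination -htelescope

theorem coeff_gapSeries (m n : ℕ) : coeff n (gapSeries d t m) = #(gapSeqs d t m n) := by
  induction t generalizing m n with
  | zero => simp [gapSeries, card_gapSeqs_zero, coeff_one]
  | succ t ih =>
    have hlt {m' : ℕ} (hm' : n < m') : coeff n (gapSeries d (t + 1) m') = 0 := by
      rw [gapSeries, coeff_X_pow_mul', if_neg]
      nlinarith
    rw [card_gapSeqs_succ]
    rcases Nat.lt_or_ge n m with hnm | hmn
    · rw [hlt hnm, Icc_eq_empty hnm.not_ge, sum_empty, Nat.cast_zero]
    · have htelescope := congrArg (coeff n) (sum_Ico_gapSeries d t (hmn.trans n.le_succ))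
      rw [map_sub, hlt n.lt_succ_self, sub_zero, map_sum] at htelescope
      rw [← htelescope, Nat.cast_sum, Nat.succ_eq_add_one, Ico_add_one_right_eq_Icc]
      exact sum_congr rfl fun a ha => by rw [coeff_X_pow_mul', if_pos (mem_Icc.1 ha).2, ih]

end GapSeries

section AndrewsSeries

/-- The part of `andrewsSeries N r (t + 1) 0` coming from sequences with first term `β`, where
`g = andrewsSeries N r t` and `β.bitIndices.headI` is the position of the lowest binary digit `1`
of `β`. -/
noncomputable def andrewsTerm (N t : ℕ) (g : ℕ → ℤ⟦X⟧) (β : ℕ) : ℤ⟦X⟧ :=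
  X ^ (β + N * t * β.bitIndices.length) * g β.bitIndices.headI

/-- The generating function of Andrews' generalization of Schur's theorem. It counts the sequences
`2 ^ c ≤ a₁ < ⋯ < a_t` in which the residue `β` of each `a_i` modulo `N`, taken in `[1, N]`, is less
than `2 ^ r` and `a_{i+1} - a_i ≥ N * w + v - β`, where `w` is the number of binary digits `1` of
`β` and `v` is the lowest power of two in `β`. The definition classifies them by the first term. -/
noncomputable def andrewsSeries (N r : ℕ) : ℕ → ℕ → ℤ⟦X⟧
  | 0, _ => 1
  | t + 1, c =>
    ∑ β ∈ Ico (2 ^ c) (2 ^ r), andrewsTerm N t (andrewsSeries N r t) β +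
      X ^ (N * (t + 1)) * geomSeries (N * (t + 1)) *
        ∑ β ∈ Ico 1 (2 ^ r), andrewsTerm N t (andrewsSeries N r t) β

variable {N r t c β : ℕ}

theorem X_pow_dvd_andrewsSeries (t c : ℕ) : X ^ t ∣ andrewsSeries N r t c := by
  induction t generalizing c with
  | zero => simp
  | succ t ih =>
    have hterm : ∀ m, 0 < m →
        X ^ (t + 1) ∣ ∑ β ∈ Ico m (2 ^ r), andrewsTerm N t (andrewsSeries N r t) β := by
      refine fun m hm => dvd_sum fun β hβ => ?_
      rw [pow_succ']
      have := (mem_Ico.1 hβ).1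
      exact mul_dvd_mul (dvd_pow_self _ (by omega)) (ih _)
    exact dvd_add (hterm _ (Nat.two_pow_pos c)) ((hterm 1 one_pos).mul_left _)

section Bound

theorem exists_bitIndices_eq_cons (hβ : 0 < β) : ∃ i l, β.bitIndices = i :: l := by
  refine List.exists_cons_of_ne_nil fun h => hβ.ne' ?_
  rw [← Nat.sum_map_two_pow_bitIndices β, h]
  simp

theorem add_le_two_pow_head_bitIndices (hβ : 0 < β) (hN : β ≤ N) :
    β + N ≤ 2 ^ β.bitIndices.headI + N * β.bitIndices.length := by
  obtain ⟨i, l, hil⟩ := exists_bitIndices_eq_cons hβ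
  have htail : (l.map (2 ^ ·)).sum ≤ l.length * N := by
    simpa using List.sum_le_card_nsmul (l.map (2 ^ ·)) N fun x hx => by
      obtain ⟨j, hj, rfl⟩ := List.mem_map.1 hx
      exact (Nat.two_pow_le_of_mem_bitIndices (hil ▸ List.mem_cons_of_mem i hj)).trans hN
  have hsum : 2 ^ i + (l.map (2 ^ ·)).sum = β := by
    rw [← List.sum_cons, ← List.map_cons, ← hil, Nat.sum_map_two_pow_bitIndices]
  rw [hil, List.headI_cons, List.length_cons]
  linarith

theorem head_bitIndices_lt (hβ : 0 < β) (hr : β < 2 ^ r) : β.bitIndices.headI < r := by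
  obtain ⟨i, l, hil⟩ := exists_bitIndices_eq_cons hβ
  rw [hil, List.headI_cons, ← Nat.pow_lt_pow_iff_right one_lt_two]
  exact (Nat.two_pow_le_of_mem_bitIndices (by simp [hil])).trans_lt hr

theorem andrewsTerm_le {g : ℕ → ℤ⟦X⟧} (hg : ∀ c < r, g c ≤ gapSeries N t (2 ^ c)) (hβ : 0 < β)
    (hβr : β < 2 ^ r) (hN : β ≤ N) :
    andrewsTerm N t g β ≤ X ^ β * gapSeries N t (β + N) := by
  set i := β.bitIndices.headI
  set w := β.bitIndices.length
  calc andrewsTerm N t g β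
      ≤ X ^ (β + N * t * w) * gapSeries N t (2 ^ i) :=
        mul_le_mul_of_nonneg_left (hg i (head_bitIndices_lt hβ hβr)) (pow_nonneg X_nonneg _)
    _ = X ^ β * gapSeries N t (2 ^ i + N * w) := by
        rw [gapSeries_add]
        ring
    _ ≤ X ^ β * gapSeries N t (β + N) :=
        mul_le_mul_of_nonneg_left
          (gapSeries_antitone N t (add_le_two_pow_head_bitIndices hβ hN)) (pow_nonneg X_nonneg _)

theorem andrewsSeries_le (hN : 0 < N) (hr : 2 ^ r ≤ N + 1) (t : ℕ) (hc : c ≤ r) :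
    andrewsSeries N r t c ≤ gapSeries N t (2 ^ c) := by
  induction t generalizing c with
  | zero => simp [andrewsSeries, gapSeries]
  | succ t ih =>
    set G := gapSeries N (t + 1)
    set P : ℤ⟦X⟧ := X ^ (N * (t + 1))
    set E := geomSeries (N * (t + 1))
    have hE : (1 - P) * E = 1 := one_sub_X_pow_mul_geomSeries (by positivity)
    have hP : 0 ≤ P := pow_nonneg X_nonneg _
    have hGshift : G (1 + N) = P * G 1 := gapSeries_add N (t + 1) 1 N
    have hsum {m : ℕ} (hm : 0 < m) (hmr : m ≤ 2 ^ r) :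
        ∑ β ∈ Ico m (2 ^ r), andrewsTerm N t (andrewsSeries N r t) β ≤ G m - G (2 ^ r) := by
      rw [← sum_Ico_gapSeries N t hmr]
      refine sum_le_sum fun β hβ => ?_
      rw [mem_Ico] at hβ
      exact andrewsTerm_le (fun c hc => ih hc.le) (by omega) hβ.2 (by omega)
    have hGr : P * G 1 ≤ G (2 ^ r) := hGshift ▸ gapSeries_antitone N (t + 1) (by omega)
    calc andrewsSeries N r (t + 1) c
        ≤ (G (2 ^ c) - G (2 ^ r)) + P * E * (G 1 - G (2 ^ r)) :=
          add_le_add (hsum (Nat.two_pow_pos c) (Nat.pow_le_pow_right two_pos hc))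
            (mul_le_mul_of_nonneg_left (hsum one_pos Nat.one_le_two_pow)
              (mul_nonneg hP geomSeries_nonneg))
      _ ≤ (G (2 ^ c) - P * G 1) + P * E * (G 1 - P * G 1) := by
          gcongr
          exact mul_nonneg hP geomSeries_nonneg
      _ = G (2 ^ c) := by linear_combination P * G 1 * hE

end Bound

section Recurrence

theorem bitIndices_two_pow_add (hβ : β < 2 ^ c) :
    (2 ^ c + β).bitIndices = β.bitIndices ++ [c] := by
  have hlt : ∀ i ∈ β.bitIndices, i < c := fun i hi =>
    (Nat.pow_lt_pow_iff_right one_lt_two).1 ((Nat.two_pow_le_of_mem_bitIndices hi).trans_lt hβ)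
  have hsorted : (β.bitIndices ++ [c]).SortedLT := by
    rw [List.sortedLT_iff_pairwise, List.pairwise_append]
    exact ⟨Nat.bitIndices_sorted.pairwise, List.pairwise_singleton _ _, by simpa using hlt⟩
  rw [← Nat.bitIndices_sum_map_two_pow hsorted]
  simp [add_comm, Nat.sum_map_two_pow_bitIndices]

theorem andrewsTerm_two_pow (g : ℕ → ℤ⟦X⟧) :
    andrewsTerm N t g (2 ^ c) = X ^ (2 ^ c + N * t) * g c := by
  simp [andrewsTerm]

theorem andrewsTerm_two_pow_add (g : ℕ → ℤ⟦X⟧) (hβ : 0 < β) (hβc : β < 2 ^ c) :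
    andrewsTerm N t g (2 ^ c + β) = X ^ (2 ^ c + N * t) * andrewsTerm N t g β := by
  obtain ⟨i, l, hil⟩ := exists_bitIndices_eq_cons hβ
  simp only [andrewsTerm, bitIndices_two_pow_add hβc, hil, List.cons_append, List.headI_cons,
    List.length_cons, List.length_append, List.length_nil]
  ring

theorem andrewsSeries_succ_sub (hc : c < r) :
    andrewsSeries N r (t + 1) c - andrewsSeries N r (t + 1) (c + 1) = X ^ (2 ^ c + N * t) *
      (andrewsSeries N r t c + andrewsSeries N r (t + 1) 0 - andrewsSeries N r (t + 1) c) := by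
  set T := andrewsTerm N t (andrewsSeries N r t)
  have hsucc : 2 ^ (c + 1) ≤ 2 ^ r := Nat.pow_le_pow_right two_pos hc
  have hlow : ∑ β ∈ Ico 1 (2 ^ c), T β + ∑ β ∈ Ico (2 ^ c) (2 ^ r), T β =
      ∑ β ∈ Ico (2 ^ 0) (2 ^ r), T β :=
    sum_Ico_consecutive T Nat.one_le_two_pow (Nat.pow_le_pow_right two_pos hc.le)
  have hblock : ∑ β ∈ Ico (2 ^ c) (2 ^ (c + 1)), T β =
      X ^ (2 ^ c + N * t) * (andrewsSeries N r t c + ∑ β ∈ Ico 1 (2 ^ c), T β) := by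
    rw [sum_eq_sum_Ico_succ_bot (Nat.pow_lt_pow_succ one_lt_two), mul_add, mul_sum]
    congr 1
    · exact andrewsTerm_two_pow _
    · rw [pow_succ, mul_two, add_comm _ 1, ← sum_Ico_add]
      exact sum_congr rfl fun β hβ =>
        andrewsTerm_two_pow_add _ (mem_Ico.1 hβ).1 (mem_Ico.1 hβ).2
  have hhigh := sum_Ico_consecutive T (Nat.pow_le_pow_right two_pos c.le_succ) hsucc
  simp only [andrewsSeries]
  linear_combination X ^ (2 ^ c + N * t) * hlow + hblock - hhigh

theorem andrewsSeries_top (hN : 0 < N) :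
    andrewsSeries N r t r = X ^ (N * t) * andrewsSeries N r t 0 := by
  cases t with
  | zero => simp [andrewsSeries]
  | succ t =>
    have hgeom := one_sub_X_pow_mul_geomSeries (i := N * (t + 1)) (by positivity)
    simp only [andrewsSeries, Ico_self, sum_empty, pow_zero]
    linear_combination X ^ (N * (t + 1)) *
      (∑ β ∈ Ico 1 (2 ^ r), andrewsTerm N t (andrewsSeries N r t) β) * hgeom

end Recurrence

end AndrewsSeries

section QDifference

variable {R : Type*} [CommRing R] {q : R} {r : ℕ} {x : ℕ → R} {φ : ℕ → R⟦X⟧} {ε : R⟦X⟧}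

theorem coeff_succ_mul_rescale_sub (hε : (1 - X) * ε = rescale q ε)
    (hone : ∀ c ≤ r, coeff 0 (φ c) = 1)
    (hstep : ∀ c < r, ∀ t, coeff (t + 1) (φ (c + 1)) = coeff (t + 1) (φ c) +
      x c * q ^ t * (coeff (t + 1) (φ c) - coeff t (φ c) - coeff (t + 1) (φ 0)))
    {c : ℕ} (hc : c < r) (t : ℕ) :
    coeff (t + 1) (φ (c + 1) * rescale q ε - φ 0 * ε) =
      (1 + x c * q ^ t) * coeff (t + 1) (φ c * rescale q ε - φ 0 * ε) := by
  set Y : R⟦X⟧ := mk fun t => coeff (t + 1) (φ c) - coeff t (φ c) - coeff (t + 1) (φ 0) with hY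
  have hXY : X * Y = (1 - X) * φ c - φ 0 := by
    ext (_ | t)
    · rw [coeff_zero_X_mul, map_sub, sub_mul, one_mul, map_sub, coeff_zero_X_mul, hone c hc.le,
        hone 0 r.zero_le]
      ring
    · rw [coeff_succ_X_mul, hY, coeff_mk, sub_mul, one_mul, map_sub, map_sub, coeff_succ_X_mul]
  have hsucc : φ (c + 1) = φ c + C (x c) * (X * rescale q Y) := by
    ext (_ | t)
    · rw [map_add, coeff_C_mul, coeff_zero_X_mul, hone _ hc, hone _ hc.le, mul_zero, add_zero]
    · rw [hstep c hc, map_add, coeff_C_mul, coeff_succ_X_mul, coeff_rescale, hY, coeff_mk,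
        mul_assoc]
  have hdiff : φ c * rescale q ε - φ 0 * ε = X * (Y * ε) := by
    linear_combination -φ c * hε - ε * hXY
  have hnew : φ (c + 1) * rescale q ε - φ 0 * ε =
      X * (Y * ε) + C (x c) * (X * rescale q (Y * ε)) := by
    rw [map_mul]
    linear_combination hdiff + rescale q ε * hsucc
  rw [hnew, hdiff, map_add, coeff_C_mul, coeff_succ_X_mul, coeff_succ_X_mul, coeff_rescale]
  ring

/-- From `c` to `c + 1`, the coefficient of `X ^ (t + 1)` in `φ c * rescale q ε - φ 0 * ε` grows by
the factor `1 + x c * q ^ t`. -/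
theorem prod_one_sub_mul_coeff_mul_eq_prod_one_add (hε : (1 - X) * ε = rescale q ε)
    (hone : ∀ c ≤ r, coeff 0 (φ c) = 1)
    (hstep : ∀ c < r, ∀ t, coeff (t + 1) (φ (c + 1)) = coeff (t + 1) (φ c) +
      x c * q ^ t * (coeff (t + 1) (φ c) - coeff t (φ c) - coeff (t + 1) (φ 0)))
    (htop : φ r = rescale q (φ 0)) (t : ℕ) :
    (∏ i ∈ range t, (1 - q ^ (i + 1))) * coeff t (φ 0 * ε) =
      coeff 0 ε * ∏ s ∈ range t, ∏ c ∈ range r, (1 + x c * q ^ s) := by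
  induction t with
  | zero => simpa using congrArg (· * coeff 0 ε) (hone 0 r.zero_le)
  | succ t ih =>
    have hprod : ∀ m ≤ r, coeff (t + 1) (φ m * rescale q ε - φ 0 * ε) =
        (∏ c ∈ range m, (1 + x c * q ^ t)) * -coeff t (φ 0 * ε) := by
      intro m
      induction m with
      | zero =>
        intro _
        rw [← hε, show φ 0 * ((1 - X) * ε) - φ 0 * ε = X * -(φ 0 * ε) by ring, coeff_succ_X_mul,
          map_neg, prod_range_zero, one_mul]
      | succ m ihm =>
        intro hm
        rw [coeff_succ_mul_rescale_sub hε hone hstep hm, ihm (by omega), prod_range_succ]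
        ring
    have hrec := hprod r le_rfl
    rw [htop, ← map_mul, map_sub, coeff_rescale] at hrec
    rw [prod_range_succ, prod_range_succ, ← mul_assoc (coeff 0 ε), ← ih]
    linear_combination -(∏ i ∈ range t, (1 - q ^ (i + 1))) * hrec

end QDifference

section SchurProduct

variable {N r : ℕ}

theorem prod_one_sub_mul_sum_andrewsSeries (hN : 0 < N) (t : ℕ) :
    (∏ i ∈ range t, (1 - (X : ℤ⟦X⟧) ^ (N * (i + 1)))) *
        ∑ p ∈ antidiagonal t, andrewsSeries N r p.1 0 * ∏ i ∈ range p.2, geomSeries (N * (i + 1)) =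
      ∏ s ∈ range t, ∏ c ∈ range r, (1 + X ^ (2 ^ c + N * s)) := by
  let φ (c : ℕ) : ℤ⟦X⟧⟦X⟧ := mk fun t => andrewsSeries N r t c
  let ε : ℤ⟦X⟧⟦X⟧ := mk fun t => ∏ i ∈ range t, geomSeries (N * (i + 1))
  have hε : (1 - X) * ε = rescale (X ^ N) ε := by
    ext1 (_ | t)
    · simp [ε]
    · have hgeom := one_sub_X_pow_mul_geomSeries (i := N * (t + 1)) (by positivity)
      rw [sub_mul, one_mul, map_sub, coeff_succ_X_mul, coeff_rescale]
      simp only [ε, coeff_mk, prod_range_succ, ← pow_mul]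
      linear_combination (∏ i ∈ range t, geomSeries (N * (i + 1))) * hgeom
  have htop : φ r = rescale (X ^ N) (φ 0) := by
    ext1 t
    rw [coeff_rescale, coeff_mk, coeff_mk, andrewsSeries_top hN, pow_mul]
  have h := prod_one_sub_mul_coeff_mul_eq_prod_one_add (x := fun c => X ^ 2 ^ c) hε
    (fun c _ => by simp [φ, andrewsSeries]) (fun c hc t => ?_) htop t
  · simpa only [coeff_mul, coeff_mk, φ, ε, ← pow_mul, ← pow_add, range_zero, prod_empty, one_mul]
      using h
  · simp only [φ, coeff_mk, ← pow_mul, ← pow_add]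
    linear_combination -andrewsSeries_succ_sub (N := N) (t := t) hc

theorem prod_one_sub_mul_prod_geomSeries (hN : 0 < N) {s t : ℕ} (h : s ≤ t) :
    (∏ i ∈ range t, (1 - X ^ (N * (i + 1)))) * ∏ i ∈ range s, geomSeries (N * (i + 1)) =
      ∏ i ∈ Ico s t, (1 - X ^ (N * (i + 1))) := by
  rw [← prod_range_mul_prod_Ico _ h, mul_right_comm, ← prod_mul_distrib,
    prod_congr rfl fun i _ => one_sub_X_pow_mul_geomSeries (i := N * (i + 1)) (by positivity),
    prod_const_one, one_mul]

theorem coeff_prod_one_add_eq_sum_coeff_andrewsSeries (hN : 0 < N) {n t : ℕ} (ht : 2 * n ≤ t) :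
    coeff n (∏ s ∈ range t, ∏ c ∈ range r, (1 + X ^ (2 ^ c + N * s)) : ℤ⟦X⟧) =
      ∑ s ∈ range (n + 1), coeff n (andrewsSeries N r s 0) := by
  rw [← prod_one_sub_mul_sum_andrewsSeries hN, mul_sum, map_sum,
    Nat.sum_antidiagonal_eq_sum_range_succ_mk,
    ← sum_range_add_sum_Ico _ (show n + 1 ≤ t.succ by omega)]
  have hhigh : ∀ s ∈ Ico (n + 1) t.succ, coeff n
      ((∏ i ∈ range t, (1 - (X : ℤ⟦X⟧) ^ (N * (i + 1)))) *
        (andrewsSeries N r s 0 * ∏ i ∈ range (t - s), geomSeries (N * (i + 1)))) = 0 := by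
    intro s hs
    refine X_pow_dvd_iff.1 (((X_pow_dvd_andrewsSeries s 0).mul_right _).mul_left _) n ?_
    exact (mem_Ico.1 hs).1
  rw [sum_eq_zero hhigh, add_zero]
  refine sum_congr rfl fun s hs => ?_
  rw [mul_left_comm, prod_one_sub_mul_prod_geomSeries hN (Nat.sub_le t s),
    coeff_mul_prod_one_sub_of_lt_order]
  intro i hi
  rw [order_X_pow, Nat.cast_lt]
  have := Nat.le_mul_of_pos_left (i + 1) hN
  grind

end SchurProduct

section Euler

variable {r : ℕ}

/-- The residues modulo `2 * (2 ^ r - 1)` of the parts in Andrews' partition inequality. -/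
def andrewsResidues (r : ℕ) : Finset ℕ :=
  insert 1 ((Ico 1 r).image fun c => 2 ^ c + (2 ^ r - 1))

theorem pos_and_lt_of_mem_andrewsResidues (hr : 0 < r) {y : ℕ} (hy : y ∈ andrewsResidues r) :
    0 < y ∧ y < 2 * (2 ^ r - 1) := by
  have htwo : 2 ^ 1 ≤ 2 ^ r := Nat.pow_le_pow_right two_pos hr
  simp only [andrewsResidues, mem_insert, mem_image, mem_Ico] at hy
  obtain rfl | ⟨c, ⟨hc, hcr⟩, rfl⟩ := hy
  · omega
  · have hone : 2 ^ 1 ≤ 2 ^ c := Nat.pow_le_pow_right two_pos hc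
    have hlast : 2 ^ (c + 1) ≤ 2 ^ r := Nat.pow_le_pow_right two_pos hcr
    omega

theorem prod_two_pow_mul_prod_two_pow_add {M : Type*} [CommMonoid M] (hr : 0 < r) (f : ℕ → M) :
    (∏ c ∈ range r, f (2 ^ c)) * ∏ c ∈ range r, f (2 ^ c + (2 ^ r - 1)) =
      (∏ y ∈ andrewsResidues r, f y) * ∏ c ∈ range r, f (2 ^ (c + 1)) := by
  have hinj : Function.Injective fun c => 2 ^ c + (2 ^ r - 1) := fun a b h =>
    Nat.pow_right_injective le_rfl (Nat.add_right_cancel h)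
  have hnotMem : 1 ∉ (Ico 1 r).image fun c => 2 ^ c + (2 ^ r - 1) := by
    simp only [mem_image, mem_Ico, not_exists, not_and]
    rintro c ⟨hc, -⟩
    have : 2 ^ 1 ≤ 2 ^ c := Nat.pow_le_pow_right two_pos hc
    omega
  have hdouble : (∏ c ∈ range r, f (2 ^ c)) * f (2 ^ r) =
      f 1 * ∏ c ∈ range r, f (2 ^ (c + 1)) := by
    rw [← prod_range_succ, prod_range_succ', mul_comm, pow_zero]
  have hshift : ∏ c ∈ range r, f (2 ^ c + (2 ^ r - 1)) =
      f (2 ^ r) * ∏ c ∈ Ico 1 r, f (2 ^ c + (2 ^ r - 1)) := by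
    rw [range_eq_Ico, prod_eq_prod_Ico_succ_bot hr, pow_zero,
      Nat.add_sub_cancel' Nat.one_le_two_pow]
  rw [hshift, ← mul_assoc, hdouble, andrewsResidues, prod_insert hnotMem,
    prod_image hinj.injOn, mul_right_comm]

theorem prod_range_two_mul {M : Type*} [CommMonoid M] (f : ℕ → M) (t : ℕ) :
    ∏ s ∈ range (2 * t), f s = ∏ j ∈ range t, f (2 * j) * f (2 * j + 1) := by
  induction t with
  | zero => rfl
  | succ t ih => rw [mul_add_one, prod_range_succ, prod_range_succ, prod_range_succ, ih, mul_assoc]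

/-- Euler's argument: multiply each factor `1 + X ^ a` by `1 - X ^ a` and cancel the factors
`1 - X ^ (2 * a)` against those that were introduced. -/
theorem prod_one_add_mul_prod_one_sub (hr : 0 < r) (t : ℕ) :
    (∏ s ∈ range (2 * t), ∏ c ∈ range r, (1 + X ^ (2 ^ c + (2 ^ r - 1) * s))) *
      ∏ j ∈ range t, ∏ y ∈ andrewsResidues r, (1 - X ^ (y + 2 * (2 ^ r - 1) * j)) =
    (∏ p ∈ Ico t (2 * t) ×ˢ range r, (1 - X ^ (2 ^ (p.2 + 1) + 2 * (2 ^ r - 1) * p.1)) :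
      ℤ⟦X⟧) := by
  set N := 2 ^ r - 1
  let big (s : ℕ) : ℤ⟦X⟧ := ∏ c ∈ range r, (1 - X ^ (2 ^ (c + 1) + 2 * N * s))
  let small (s : ℕ) : ℤ⟦X⟧ := ∏ c ∈ range r, (1 - X ^ (2 ^ c + N * s))
  have hbig (s : ℕ) : (∏ c ∈ range r, (1 + X ^ (2 ^ c + N * s))) * small s = big s := by
    rw [← prod_mul_distrib]
    refine prod_congr rfl fun c _ => ?_
    ring
  have hpair (j : ℕ) : small (2 * j) * small (2 * j + 1) =
      (∏ y ∈ andrewsResidues r, (1 - X ^ (y + 2 * N * j))) * big j := by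
    rw [← prod_two_pow_mul_prod_two_pow_add hr fun a => 1 - (X : ℤ⟦X⟧) ^ (a + 2 * N * j)]
    congr 1 <;> refine prod_congr rfl fun c _ => ?_ <;> ring
  have hsmall : ∏ s ∈ range (2 * t), small s =
      (∏ j ∈ range t, ∏ y ∈ andrewsResidues r, (1 - X ^ (y + 2 * N * j))) *
        ∏ j ∈ range t, big j := by
    rw [prod_range_two_mul, ← prod_mul_distrib]
    exact prod_congr rfl fun j _ => hpair j
  have hne : ∏ j ∈ range t, big j ≠ 0 := fun h => by
    simpa [big, map_prod] using congrArg (constantCoeff (R := ℤ)) h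
  apply mul_right_cancel₀ hne
  rw [mul_assoc, ← hsmall, ← prod_mul_distrib, prod_congr rfl fun s _ => hbig s, prod_product,
    ← prod_range_mul_prod_Ico _ (show t ≤ 2 * t by omega), mul_comm]

end Euler

section AndrewsInequality

variable {r : ℕ}

theorem prod_one_sub_mul_prod_geomSeries_eq_one {s : Finset ℕ} (hs : 0 ∉ s) :
    (∏ x ∈ s, (1 - X ^ x)) * ∏ x ∈ s, geomSeries x = 1 := by
  rw [← prod_mul_distrib]
  exact prod_eq_one fun x hx =>
    one_sub_X_pow_mul_geomSeries (Nat.pos_of_ne_zero (ne_of_mem_of_not_mem hx hs))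

theorem prod_range_mul_filter_mod_mem {M : Type*} [CommMonoid M] {m : ℕ} {S : Finset ℕ}
    (hS : S ⊆ range m) (k : ℕ) (f : ℕ → M) :
    ∏ x ∈ range (m * k) with x % m ∈ S, f x = ∏ j ∈ range k, ∏ y ∈ S, f (y + m * j) := by
  rw [← prod_product' (f := fun j y => f (y + m * j))]
  refine prod_nbij' (fun x => (x / m, x % m)) (fun p => p.2 + m * p.1) ?_ ?_ ?_ ?_ ?_
  · intro x hx
    simp only [mem_filter, mem_range, mem_product] at hx ⊢
    exact ⟨Nat.div_lt_of_lt_mul hx.1, hx.2⟩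
  · rintro ⟨j, y⟩ hp
    simp only [mem_filter, mem_range, mem_product] at hp ⊢
    have hy : y < m := mem_range.1 (hS hp.2)
    rw [Nat.add_mul_mod_self_left, Nat.mod_eq_of_lt hy]
    exact ⟨by nlinarith, hp.2⟩
  · intro x _
    exact Nat.mod_add_div x m
  · rintro ⟨j, y⟩ hp
    have hy : y < m := mem_range.1 (hS (mem_product.1 hp).2)
    rw [Nat.add_mul_mod_self_left, Nat.mod_eq_of_lt hy, Nat.add_mul_div_left _ _ (by omega),
      Nat.div_eq_of_lt hy, zero_add]
  · intro x _
    rw [Nat.mod_add_div]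

theorem card_restricted_andrewsResidues_eq (hr : 0 < r) (n : ℕ) :
    (#(Nat.Partition.restricted n (· % (2 * (2 ^ r - 1)) ∈ andrewsResidues r)) : ℤ) =
      coeff n (∏ s ∈ range (2 * (n + 1)), ∏ c ∈ range r, (1 + X ^ (2 ^ c + (2 ^ r - 1) * s))) := by
  have hcancel := prod_one_add_mul_prod_one_sub hr (n + 1)
  set m := 2 * (2 ^ r - 1)
  set P : ℤ⟦X⟧ := ∏ s ∈ range (2 * (n + 1)), ∏ c ∈ range r, (1 + X ^ (2 ^ c + (2 ^ r - 1) * s))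
  have hres {y : ℕ} (hy : y ∈ andrewsResidues r) : 0 < y ∧ y < m :=
    pos_and_lt_of_mem_andrewsResidues hr hy
  have hmpos : 0 < m := by have := Nat.one_lt_two_pow hr.ne'; omega
  let parts : Finset ℕ := {x ∈ range (m * (n + 1)) | x % m ∈ andrewsResidues r}
  have hparts : Nat.Partition.restricted n (· % m ∈ andrewsResidues r) =
      Nat.Partition.restricted n (· ∈ parts) := by
    refine filter_congr fun p _ => forall₂_congr fun x hx => ?_
    have hlt : x < m * (n + 1) := by nlinarith [p.le_of_mem_parts hx]
    simp only [parts, mem_filter, mem_range, hlt, true_and]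
  have hinv : (∏ x ∈ parts, (1 - X ^ x)) * ∏ x ∈ parts, geomSeries x = 1 :=
    prod_one_sub_mul_prod_geomSeries_eq_one fun h =>
      (hres (mem_filter.1 h).2).1.ne' (Nat.zero_mod m)
  rw [← prod_range_mul_filter_mod_mem (fun y hy => mem_range.2 (hres hy).2) (n + 1)
    fun x => 1 - (X : ℤ⟦X⟧) ^ x] at hcancel
  calc (#(Nat.Partition.restricted n (· % m ∈ andrewsResidues r)) : ℤ)
      = coeff n (∏ x ∈ parts, geomSeries x) := by rw [hparts, coeff_prod_geomSeries]
    _ = coeff n ((∏ x ∈ parts, geomSeries x) * (P * ∏ x ∈ parts, (1 - X ^ x))) := by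
      rw [hcancel, coeff_mul_prod_one_sub_of_lt_order]
      intro p hp
      have hp₁ : n + 1 ≤ p.1 := (mem_Ico.1 (mem_product.1 hp).1).1
      have := Nat.le_mul_of_pos_left p.1 hmpos
      rw [order_X_pow, Nat.cast_lt]
      exact Nat.lt_add_left _ (hp₁.trans this)
    _ = coeff n P := by
      congr 1
      linear_combination P * hinv

theorem card_restricted_andrewsResidues_le (hr : 0 < r) (n : ℕ) :
    #(Nat.Partition.restricted n (· % (2 * (2 ^ r - 1)) ∈ andrewsResidues r)) ≤
      ∑ t ∈ range (n + 1), #(gapSeqs (2 ^ r - 1) t 1 n) := by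
  have hN : 0 < 2 ^ r - 1 := Nat.sub_pos_of_lt (Nat.one_lt_two_pow hr.ne')
  zify
  rw [card_restricted_andrewsResidues_eq hr,
    coeff_prod_one_add_eq_sum_coeff_andrewsSeries hN (by omega)]
  refine sum_le_sum fun t _ => ?_
  rw [← coeff_gapSeries]
  exact andrewsSeries_le hN (by omega) t r.zero_le n

end AndrewsInequality

section Compression

/-- The numbers congruent to `1` or `-1` modulo `d` that are at least `2 * d - 1`. -/
def IsLargePart (d x : ℕ) : Prop := ∃ k, 2 ≤ k ∧ (x + 1 = k * d ∨ x = k * d + 1)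

/-- The parts of `s` other than `1` and `d + 1`; for the partitions counted by
`congMinusCount (d - 3) 1` all of them satisfy `IsLargePart d`. -/
def largeParts (d : ℕ) (s : Multiset ℕ) : Multiset ℕ := s.filter fun x => x ≠ 1 ∧ x ≠ d + 1

/-- The large part `k * d ± 1` coded by `z`. For `k` even, `k * d - 1` and `k * d + 1` have codes
`31 * k - 27` and `31 * k - 23`; for `k` odd they have codes `31 * k - 46` and `31 * k - 30`. -/
def expandPart (d z : ℕ) : ℕ :=
  if z % 62 = 35 then (z + 27) / 31 * d - 1
  else if z % 62 = 39 then (z + 23) / 31 * d + 1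
  else if z % 62 = 47 then (z + 46) / 31 * d - 1
  else (z + 30) / 31 * d + 1

/-- Reads off from the parts `c`, `1` excluded, of a partition of `31 * n / d` the multiplicity of
`d + 1` and the large parts of the partition of `n` it codes. A part `33` codes one `d + 1`, a part
`95` codes four; two or three copies of `d + 1` with no large part need the separate codes `{47}`
and `{35, 39}` when `n` is too small for two or three parts `33`. -/
def expandCore (d n : ℕ) (c : Multiset ℕ) : ℕ × Multiset ℕ :=
  if c = {47} ∧ 31 * n < 66 * d then (2, 0)
  else if c = {35, 39} ∧ 31 * n < 99 * d then (3, 0)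
  else (c.count 33 + 4 * c.count 95, (c.filter fun z => z ≠ 33 ∧ z ≠ 95).map (expandPart d))

variable {d n i x : ℕ} {s s' L Z : Multiset ℕ}

theorem andrewsResidues_five : andrewsResidues 5 = {1, 33, 35, 39, 47} := by decide

theorem isLargePart_of_modEq (hx0 : 0 < x) (hx : x ≡ 1 [MOD d] ∨ x + 1 ≡ 0 [MOD d])
    (hx1 : x ≠ 1) (hxd : x ≠ d + 1) (hxd' : x ≠ d - 1) : IsLargePart d x := by
  rcases hx with hx | hx
  · obtain ⟨k, hk⟩ := (Nat.modEq_iff_dvd' hx0).1 hx.symm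
    have hk0 : k ≠ 0 := by rintro rfl; omega
    have hk1 : k ≠ 1 := by rintro rfl; omega
    exact ⟨k, by omega, Or.inr (by rw [mul_comm]; omega)⟩
  · obtain ⟨k, hk⟩ := Nat.modEq_zero_iff_dvd.1 hx
    have hk0 : k ≠ 0 := by rintro rfl; omega
    have hk1 : k ≠ 1 := by rintro rfl; omega
    exact ⟨k, by omega, Or.inl (by rw [hk, mul_comm])⟩

theorem eq_add_largeParts (hd : d ≠ 0) (s : Multiset ℕ) :
    s = Multiset.replicate (s.count 1) 1 + Multiset.replicate (s.count (d + 1)) (d + 1) +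
      largeParts d s := by
  ext x
  rw [Multiset.count_add, Multiset.count_add, Multiset.count_replicate, Multiset.count_replicate,
    largeParts, Multiset.count_filter]
  split_ifs <;> grind

theorem sum_eq_add_largeParts (hd : d ≠ 0) (s : Multiset ℕ) :
    s.sum = s.count 1 + s.count (d + 1) * (d + 1) + (largeParts d s).sum := by
  conv_lhs => rw [eq_add_largeParts hd s]
  simp

theorem eq_of_largeParts_eq (hd : d ≠ 0) (hsum : s.sum = s'.sum)
    (hcount : s.count (d + 1) = s'.count (d + 1)) (hlarge : largeParts d s = largeParts d s') :
    s = s' := by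
  have h := sum_eq_add_largeParts hd s
  have h' := sum_eq_add_largeParts hd s'
  rw [hsum, h', hcount, hlarge] at h
  rw [eq_add_largeParts hd s, eq_add_largeParts hd s', hcount, hlarge,
    show s.count 1 = s'.count 1 by omega]

theorem IsLargePart.exists_expandPart_eq (hd : 7 ≤ d) (hx : IsLargePart d x) :
    ∃ z, z % 62 ∈ andrewsResidues 5 ∧ z ∉ ({1, 33, 95} : Finset ℕ) ∧
      expandPart d z = x ∧ d * z + 22 * d ≤ 31 * x := by
  obtain ⟨k, hk, hx⟩ := hx
  have hcost {z a : ℕ} (hz : z + a = 31 * k) : d * z + a * d = 31 * (k * d) := by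
    rw [mul_comm a, ← mul_add, hz]
    ring
  simp only [andrewsResidues_five, mem_insert, mem_singleton]
  rcases Nat.even_or_odd' k with ⟨l, rfl | rfl⟩ <;> rcases hx with hx | rfl
  · have := hcost (z := 62 * l - 27) (a := 27) (by omega)
    refine ⟨62 * l - 27, by omega, by omega, ?_, by omega⟩
    rw [expandPart, if_pos (by omega), show (62 * l - 27 + 27) / 31 = 2 * l by omega]
    omega
  · have := hcost (z := 62 * l - 23) (a := 23) (by omega)
    refine ⟨62 * l - 23, by omega, by omega, ?_, by omega⟩
    rw [expandPart, if_neg (by omega), if_pos (by omega),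
      show (62 * l - 23 + 23) / 31 = 2 * l by omega]
  · have := hcost (z := 62 * l - 15) (a := 46) (by omega)
    refine ⟨62 * l - 15, by omega, by omega, ?_, by omega⟩
    rw [expandPart, if_neg (by omega), if_neg (by omega), if_pos (by omega),
      show (62 * l - 15 + 46) / 31 = 2 * l + 1 by omega]
    omega
  · have := hcost (z := 62 * l + 1) (a := 30) (by omega)
    refine ⟨62 * l + 1, by omega, by omega, ?_, by omega⟩
    rw [expandPart, if_neg (by omega), if_neg (by omega), if_neg (by omega),
      show (62 * l + 1 + 30) / 31 = 2 * l + 1 by omega]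

theorem exists_map_expandPart_eq (hd : 7 ≤ d) (hL : ∀ x ∈ L, IsLargePart d x) :
    ∃ Z : Multiset ℕ, (∀ z ∈ Z, z % 62 ∈ andrewsResidues 5 ∧ z ∉ ({1, 33, 95} : Finset ℕ)) ∧
      Z.map (expandPart d) = L ∧ d * Z.sum + 22 * d * L.card ≤ 31 * L.sum := by
  induction L using Multiset.induction_on with
  | empty => exact ⟨0, by simp⟩
  | cons x L ih =>
    rw [Multiset.forall_mem_cons] at hL
    obtain ⟨z, hz, hz', hzx, hzle⟩ := hL.1.exists_expandPart_eq hd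
    obtain ⟨Z, hZ, hZL, hZle⟩ := ih hL.2
    refine ⟨z ::ₘ Z, Multiset.forall_mem_cons.2 ⟨⟨hz, hz'⟩, hZ⟩, ?_, ?_⟩
    · rw [Multiset.map_cons, hzx, hZL]
    · simp only [Multiset.sum_cons, Multiset.card_cons]
      linarith

theorem expandCore_replicate_add (hZ : ∀ z ∈ Z, z ≠ 33 ∧ z ≠ 95)
    (hsum : i * (d + 1) + (Z.map (expandPart d)).sum ≤ n) (hd : 2 ≤ d) :
    expandCore d n (Multiset.replicate (i % 4) 33 + Multiset.replicate (i / 4) 95 + Z) =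
      (i, Z.map (expandPart d)) := by
  set c := Multiset.replicate (i % 4) 33 + Multiset.replicate (i / 4) 95 + Z with hc
  have hcount : c.count 33 + 4 * c.count 95 = i := by
    rw [hc]
    simp only [Multiset.count_add, Multiset.count_replicate,
      Multiset.count_eq_zero_of_notMem fun h => (hZ 33 h).1 rfl,
      Multiset.count_eq_zero_of_notMem fun h => (hZ 95 h).2 rfl]
    norm_num
    omega
  have hfilter : c.filter (fun z => z ≠ 33 ∧ z ≠ 95) = Z := by
    rw [hc, Multiset.filter_add, Multiset.filter_add, Multiset.filter_eq_self.2 hZ,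
      Multiset.filter_eq_nil.2 fun z hz => by simp [Multiset.eq_of_mem_replicate hz],
      Multiset.filter_eq_nil.2 fun z hz => by simp [Multiset.eq_of_mem_replicate hz],
      zero_add, zero_add]
  clear_value c
  rw [expandCore, if_neg, if_neg, hcount, hfilter]
  all_goals
    rintro ⟨rfl, hlt⟩
    have hZ' := congrArg (fun W => (W.map (expandPart d)).sum) hfilter.symm
    simp [expandPart, Multiset.filter_singleton] at hZ'
    omega

theorem mul_sum_replicate_add_le {S : ℕ} (hdn : 33 * d ≤ 31 * n) (hsum : i * (d + 1) + S ≤ n)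
    (hZ : d * Z.sum + 22 * d * Z.card ≤ 31 * S)
    (h₂ : i = 2 → Z = 0 → 66 * d ≤ 31 * n) (h₃ : i = 3 → Z = 0 → 99 * d ≤ 31 * n) :
    d * (Multiset.replicate (i % 4) 33 + Multiset.replicate (i / 4) 95 + Z).sum ≤ 31 * n := by
  have hslack : d * Z.sum + 22 * d * Z.card + 31 * i * d ≤ 31 * n := by linarith
  simp only [Multiset.sum_add, Multiset.sum_replicate, smul_eq_mul]
  rcases le_or_gt 4 i with hi | hi
  · have := Nat.mul_le_mul_left d (show i % 4 * 33 + i / 4 * 95 ≤ 31 * i by omega)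
    rw [mul_add]
    linarith [Nat.zero_le (22 * d * Z.card)]
  rw [Nat.mod_eq_of_lt hi, Nat.div_eq_of_lt hi]
  rcases Multiset.empty_or_exists_mem Z with rfl | ⟨z, hz⟩
  · simp only [true_implies, Multiset.sum_zero] at h₂ h₃ ⊢
    interval_cases i <;> omega
  · have hcard : 22 * d ≤ 22 * d * Z.card :=
      Nat.le_mul_of_pos_right _ (Multiset.card_pos_iff_exists_mem.2 ⟨z, hz⟩)
    have := Nat.mul_le_mul_left d (show i * 33 ≤ 31 * i + 6 by omega)
    linarith

theorem exists_expandCore_eq (hd : 7 ≤ d) (hdn : 33 * d ≤ 31 * n)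
    (hL : ∀ x ∈ L, IsLargePart d x) (hsum : i * (d + 1) + L.sum ≤ n) :
    ∃ c : Multiset ℕ, (∀ z ∈ c, z % 62 ∈ andrewsResidues 5 ∧ z ≠ 1) ∧ d * c.sum ≤ 31 * n ∧
      expandCore d n c = (i, L) := by
  by_cases h₂ : i = 2 ∧ L = 0 ∧ 31 * n < 66 * d
  · obtain ⟨rfl, rfl, hn⟩ := h₂
    refine ⟨{47}, by simp [andrewsResidues_five], ?_, if_pos ⟨rfl, hn⟩⟩
    rw [Multiset.sum_singleton]
    omega
  by_cases h₃ : i = 3 ∧ L = 0 ∧ 31 * n < 99 * d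
  · obtain ⟨rfl, rfl, hn⟩ := h₃
    refine ⟨{35, 39}, by simp [andrewsResidues_five], ?_, ?_⟩
    · rw [Multiset.insert_eq_cons, Multiset.sum_cons, Multiset.sum_singleton]
      omega
    · rw [expandCore, if_neg (fun h => absurd h.1 (by decide)), if_pos ⟨rfl, hn⟩]
  obtain ⟨Z, hZ, rfl, hZle⟩ := exists_map_expandPart_eq hd hL
  have hZ' : ∀ z ∈ Z, z ≠ 1 ∧ z ≠ 33 ∧ z ≠ 95 := fun z hz => by simpa using (hZ z hz).2
  refine ⟨_, ?_, ?_, expandCore_replicate_add (fun z hz => (hZ' z hz).2) hsum (by omega)⟩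
  · intro z hz
    simp only [Multiset.mem_add, Multiset.mem_replicate] at hz
    rcases hz with (⟨-, rfl⟩ | ⟨-, rfl⟩) | hz
    · decide
    · decide
    · exact ⟨(hZ z hz).1, (hZ' z hz).1⟩
  · rw [Multiset.card_map] at hZle
    refine mul_sum_replicate_add_le hdn hsum hZle (fun hi hZ₀ => ?_) fun hi hZ₀ => ?_
    · by_contra! hn
      exact h₂ ⟨hi, by rw [hZ₀, Multiset.map_zero], hn⟩
    · by_contra! hn
      exact h₃ ⟨hi, by rw [hZ₀, Multiset.map_zero], hn⟩

theorem exists_restricted_expandCore_eq (hd : 7 ≤ d) (hdn : 33 * d ≤ 31 * n)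
    (hs : s.sum = n) (hL : ∀ x ∈ largeParts d s, IsLargePart d x) :
    ∃ q ∈ Nat.Partition.restricted (31 * n / d) (· % 62 ∈ andrewsResidues 5),
      expandCore d n (q.parts.filter (· ≠ 1)) = (s.count (d + 1), largeParts d s) := by
  obtain ⟨c, hc, hcsum, hcs⟩ := exists_expandCore_eq (i := s.count (d + 1)) hd hdn hL
    (by have := sum_eq_add_largeParts (d := d) (by omega) s; omega)
  have hcle : c.sum ≤ 31 * n / d := by rwa [Nat.le_div_iff_mul_le (by omega), mul_comm]
  let ones := Multiset.replicate (31 * n / d - c.sum) 1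
  have hres : ∀ z ∈ c + ones, z % 62 ∈ andrewsResidues 5 := by
    intro z hz
    rcases Multiset.mem_add.1 hz with hz | hz
    · exact (hc z hz).1
    · rw [Multiset.eq_of_mem_replicate hz]
      decide
  refine ⟨⟨c + ones, fun {z} hz => Nat.pos_of_ne_zero ?_, ?_⟩, ?_, ?_⟩
  · rintro rfl
    exact absurd (hres 0 hz) (by decide)
  · simp only [ones, Multiset.sum_add, Multiset.sum_replicate, smul_eq_mul, mul_one]
    exact Nat.add_sub_cancel' hcle
  · exact mem_filter.2 ⟨mem_univ _, hres⟩
  · rw [← hcs, Multiset.filter_add, Multiset.filter_eq_self.2 fun z hz => (hc z hz).2,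
      Multiset.filter_eq_nil.2 fun z hz => by simp [Multiset.eq_of_mem_replicate hz], add_zero]

theorem congMinusCount_le_card (hd : 3 ≤ d) {T : Finset (ℕ × Multiset ℕ)}
    (hT : ∀ s : Multiset ℕ, s.sum = n → (∀ x ∈ largeParts d s, IsLargePart d x) →
      (s.count (d + 1), largeParts d s) ∈ T) :
    congMinusCount (d - 3) 1 n ≤ #T := by
  rw [congMinusCount, Nat.sub_add_cancel hd, ← Nat.card_eq_finsetCard T]
  refine Nat.card_le_card_of_injective
    (fun p => ⟨(p.1.parts.count (d + 1), largeParts d p.1.parts), hT _ p.1.parts_sum ?_⟩) ?_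
  · intro x hx
    obtain ⟨hx, hx1, hxd⟩ := Multiset.mem_filter.1 hx
    exact isLargePart_of_modEq (p.1.parts_pos hx) (p.2.1 x hx) hx1 hxd (p.2.2 x hx)
  · intro p p' h
    obtain ⟨hcount, hlarge⟩ := Prod.mk.inj (Subtype.mk.inj h)
    exact Subtype.ext (Nat.Partition.ext (eq_of_largeParts_eq (by omega)
      (p.1.parts_sum.trans p'.1.parts_sum.symm) hcount hlarge))

theorem congMinusCount_le_card_restricted (hd : 7 ≤ d) (hdn : 33 * d ≤ 31 * n) :
    congMinusCount (d - 3) 1 n ≤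
      #(Nat.Partition.restricted (31 * n / d) (· % 62 ∈ andrewsResidues 5)) :=
  (congMinusCount_le_card (by omega) fun _ hs hL =>
    mem_image.2 (exists_restricted_expandCore_eq hd hdn hs hL)).trans card_image_le

theorem congMinusCount_le_two (hd : 3 ≤ d) (hn : n < 2 * d - 1) :
    congMinusCount (d - 3) 1 n ≤ 2 := by
  refine congMinusCount_le_card (T := {(0, 0), (1, 0)}) hd fun s hs hL => ?_
  have hlarge : largeParts d s = 0 := by
    refine Multiset.eq_zero_of_forall_notMem fun x hx => ?_
    obtain ⟨k, hk, h⟩ := hL x hx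
    have := Multiset.single_le_sum (fun y _ => y.zero_le) x (Multiset.mem_filter.1 hx).1
    have := Nat.mul_le_mul_right d hk
    omega
  have hcount : s.count (d + 1) < 2 := by
    have := sum_eq_add_largeParts (d := d) (by omega) s
    by_contra! h
    have := Nat.mul_le_mul_right (d + 1) h
    omega
  simp only [hlarge, mem_insert, mem_singleton, Prod.mk.injEq, and_true]
  omega

end Compression

section Main

variable {c d n : ℕ}

theorem two_le_gapCount (hn : d + 2 ≤ n) : 2 ≤ gapCount d 1 n := by
  have h₁ : #(gapSeqs d 1 1 n) = 1 := by rw [card_gapSeqs_one, if_pos (by omega)]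
  have h₂ : 1 ≤ #(gapSeqs d 2 1 n) := by
    rw [one_le_card]
    exact ⟨[1, n - 1], mem_gapSeqs.2 (by simp; omega)⟩
  calc 2 ≤ ∑ t ∈ ({1, 2} : Finset ℕ), #(gapSeqs d t 1 n) := by
        rw [sum_pair (by decide)]
        omega
    _ ≤ gapCount d 1 n := sum_card_gapSeqs_le_gapCount one_pos _

theorem sum_card_gapSeqs_scale (hc : 0 < c) (hcd : c ≤ d) (hn : d ≤ c * n) (T : Finset ℕ) :
    ∑ t ∈ T, #(gapSeqs c t 1 (c * n / d)) ≤ ∑ t ∈ T, #(gapSeqs d t 1 n) := by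
  refine sum_le_sum fun t _ => ?_
  cases t with
  | zero =>
    rw [card_gapSeqs_zero, if_neg (Nat.div_pos hn (by omega)).ne']
    exact Nat.zero_le _
  | succ t => exact card_gapSeqs_scale hc hcd (by omega) (Nat.mul_div_le _ _)

end Main

end GapPartition

open GapPartition Finset in
theorem stmt6_general (d n : ℕ) (hd : 31 ≤ d) (hn : d + 2 ≤ n) :
    congMinusCount (d - 3) 1 n ≤ gapCount d 1 n := by
  rcases lt_or_ge (31 * n) (33 * d) with h | h
  · exact (congMinusCount_le_two (by omega) (by omega)).trans (two_le_gapCount hn)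
  · calc congMinusCount (d - 3) 1 n
        ≤ #(Nat.Partition.restricted (31 * n / d) (· % 62 ∈ andrewsResidues 5)) :=
          congMinusCount_le_card_restricted (by omega) h
      _ ≤ ∑ t ∈ range (31 * n / d + 1), #(gapSeqs 31 t 1 (31 * n / d)) :=
          card_restricted_andrewsResidues_le (r := 5) (by norm_num) _
      _ ≤ ∑ t ∈ range (31 * n / d + 1), #(gapSeqs d t 1 n) :=
          sum_card_gapSeqs_scale (by norm_num) hd (by omega) _
      _ ≤ gapCount d 1 n := sum_card_gapSeqs_le_gapCount one_pos _

theorem stmt6 (d n : ℕ) (hd : d = 31 ∨ 63 ≤ d) (hn : d + 2 ≤ n) :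
    congMinusCount (d - 3) 1 n ≤ gapCount d 1 n :=
  stmt6_general d n (by omega) hn
end

section
/- Let a be a positive integer and let S = {x_i}_{i≥1} and T = {y_i}_{i≥1} be two strictly increasing sequences of positive integers such that y₁ = a, a divides y_i for every i, and x_i ≥ y_i for every i. Then for all n ≥ 1, ρ(T; n + h_n^{(a)}) ≥ ρ(S; n). -/
/-!
Index the parts: a partition of `n` into parts from `S` becomes a multiset of indices with `x`-sum
`n`. Replacing each `x i` by `y i` does not increase the sum and makes it a multiple of `a`, so the
deficit from any multiple `m ≥ n` of `a` can be filled with copies of `a = y 0`. The number of added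
copies need not be remembered: two multisets that agree after padding differ only by copies of the
index `0`, and since both have `x`-sum `n` and `x 0 > 0`, they are equal.
-/

/-- The partitions of `n` into parts `w i` coloured by their index, encoded as multisets of indices.
They replace the partitions counted by `rhoCount`, so that parts taken from two different sequences
can be exchanged index by index; `w` need not be injective, nor its values positive. -/
def colouredPartitions {ι : Type*} (w : ι → ℕ) (n : ℕ) : Set (Multiset ι) :=
  {u | (u.map w).sum = n}

theorem natCast_rhoCount_eq_encard (R : Set ℕ) (n : ℕ) :
    (rhoCount R n : ℕ∞) = {s : Multiset ℕ | s.sum = n ∧ ∀ z ∈ s, 0 < z ∧ z ∈ R}.encard := by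
  have himage : Nat.Partition.parts '' {p : n.Partition | ∀ z ∈ p.parts, z ∈ R} =
      {s : Multiset ℕ | s.sum = n ∧ ∀ z ∈ s, 0 < z ∧ z ∈ R} := by
    ext s
    constructor
    · rintro ⟨p, hp, rfl⟩
      exact ⟨p.parts_sum, fun z hz => ⟨p.parts_pos hz, hp z hz⟩⟩
    · rintro ⟨hsum, hs⟩
      exact ⟨⟨s, fun hz => (hs _ hz).1, hsum⟩, fun z hz => (hs z hz).2, rfl⟩
  have hparts : Function.Injective (Nat.Partition.parts (n := n)) := fun _ _ => Nat.Partition.ext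
  rw [← himage, hparts.encard_image]
  exact Set.Finite.cast_ncard_eq (Set.toFinite _)

section ColouredPartitions

variable {ι : Type*}

theorem rhoCount_range_le_encard_colouredPartitions (w : ι → ℕ) (n : ℕ) :
    (rhoCount (Set.range w) n : ℕ∞) ≤ (colouredPartitions w n).encard := by
  rw [natCast_rhoCount_eq_encard]
  have hsurj : {s : Multiset ℕ | s.sum = n ∧ ∀ z ∈ s, 0 < z ∧ z ∈ Set.range w} ⊆
      Multiset.map w '' colouredPartitions w n := by
    rintro s ⟨hsum, hs⟩
    have : CanLift ℕ ι w (· ∈ Set.range w) := ⟨fun _ => id⟩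
    lift s to Multiset ι using fun z hz => (hs z hz).2
    exact ⟨s, hsum, rfl⟩
  exact (Set.encard_le_encard hsurj).trans (Set.encard_image_le _ _)

theorem encard_colouredPartitions_le_rhoCount_range {w : ι → ℕ} (hw : Function.Injective w)
    (hpos : ∀ i, 0 < w i) (n : ℕ) :
    (colouredPartitions w n).encard ≤ rhoCount (Set.range w) n := by
  rw [natCast_rhoCount_eq_encard]
  refine Set.encard_le_encard_of_injOn (f := Multiset.map w) (fun u hu => ⟨hu, fun z hz => ?_⟩)
    (Multiset.map_injective hw).injOn
  obtain ⟨i, -, rfl⟩ := Multiset.mem_map.1 hz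
  exact ⟨hpos i, i, rfl⟩

theorem eq_of_add_replicate_eq {M : Type*} [AddCancelCommMonoid M] {w : ι → M} {i : ι}
    (hw : Function.Injective fun k : ℕ => k • w i) {u v : Multiset ι} {k l : ℕ}
    (hsum : (u.map w).sum = (v.map w).sum)
    (h : u + Multiset.replicate k i = v + Multiset.replicate l i) : u = v := by
  have hkl : k • w i = l • w i := by
    have hsums := congrArg (fun t => (t.map w).sum) h
    simpa only [Multiset.map_add, Multiset.map_replicate, Multiset.sum_add,
      Multiset.sum_replicate, hsum, add_right_inj] using hsums
  rw [hw hkl] at h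
  exact add_right_cancel h

theorem exists_add_replicate_mem_colouredPartitions {y : ι → ℕ} {i : ι} (hdvd : ∀ j, y i ∣ y j)
    {u : Multiset ι} {m : ℕ} (hm : y i ∣ m) (hle : (u.map y).sum ≤ m) :
    ∃ k, u + Multiset.replicate k i ∈ colouredPartitions y m := by
  have hsum : y i ∣ (u.map y).sum := Multiset.dvd_sum (by simpa using fun j _ => hdvd j)
  obtain ⟨k, hk⟩ := Nat.dvd_sub hm hsum
  refine ⟨k, ?_⟩
  calc ((u + Multiset.replicate k i).map y).sum = (u.map y).sum + y i * k := by
        simp [mul_comm]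
    _ = m := by rw [← hk, Nat.add_sub_cancel' hle]

theorem encard_colouredPartitions_le {x y : ι → ℕ} {i : ι} (hxi : 0 < x i)
    (hdvd : ∀ j, y i ∣ y j) (hyx : ∀ j, y j ≤ x j) {m n : ℕ} (hm : y i ∣ m) (hnm : n ≤ m) :
    (colouredPartitions x n).encard ≤ (colouredPartitions y m).encard := by
  have hpad (u) (hu : u ∈ colouredPartitions x n) :
      ∃ k, u + Multiset.replicate k i ∈ colouredPartitions y m :=
    exists_add_replicate_mem_colouredPartitions hdvd hm <|
      calc (u.map y).sum ≤ (u.map x).sum := Multiset.sum_map_le_sum_map y x fun j _ => hyx j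
        _ = n := hu
        _ ≤ m := hnm
  choose! k hk using hpad
  refine Set.encard_le_encard_of_injOn (f := fun u => u + Multiset.replicate (k u) i) hk
    fun u hu v hv huv => ?_
  exact eq_of_add_replicate_eq (mul_left_injective₀ hxi.ne') (hu.trans hv.symm) huv

theorem stmt7_general {x y : ι → ℕ} {i : ι} (hy : Function.Injective y) (hypos : ∀ j, 0 < y j)
    (hdvd : ∀ j, y i ∣ y j) (hyx : ∀ j, y j ≤ x j) {m n : ℕ} (hm : y i ∣ m) (hnm : n ≤ m) :
    rhoCount (Set.range x) n ≤ rhoCount (Set.range y) m := by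
  have hxi : 0 < x i := (hypos i).trans_le (hyx i)
  have hcard : (rhoCount (Set.range x) n : ℕ∞) ≤ rhoCount (Set.range y) m :=
    calc (rhoCount (Set.range x) n : ℕ∞)
      _ ≤ (colouredPartitions x n).encard := rhoCount_range_le_encard_colouredPartitions x n
      _ ≤ (colouredPartitions y m).encard := encard_colouredPartitions_le hxi hdvd hyx hm hnm
      _ ≤ rhoCount (Set.range y) m := encard_colouredPartitions_le_rhoCount_range hy hypos m
  exact_mod_cast hcard

end ColouredPartitions

theorem dvd_add_negRes (n : ℕ) {a : ℕ} (ha : 0 < a) : a ∣ n + negRes n a := by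
  have hmod : n + negRes n a ≡ n % a + (a - n % a) [MOD a] :=
    (Nat.mod_modEq n a).symm.add (Nat.mod_modEq _ a)
  rw [Nat.add_sub_cancel' (Nat.mod_lt n ha).le] at hmod
  exact (hmod.dvd_iff dvd_rfl).2 dvd_rfl

theorem stmt7 (a : ℕ) (ha : 1 ≤ a) (x y : ℕ → ℕ)
    (hx : StrictMono x) (hy : StrictMono y)
    (hxpos : ∀ i, 0 < x i) (hypos : ∀ i, 0 < y i)
    (hy0 : y 0 = a) (hdvd : ∀ i, a ∣ y i) (hxy : ∀ i, y i ≤ x i)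
    (n : ℕ) (hn : 1 ≤ n) :
    rhoCount (Set.range x) n ≤ rhoCount (Set.range y) (n + negRes n a) := by
  subst hy0
  exact stmt7_general hy.injective hypos hdvd hxy (dvd_add_negRes n ha) (Nat.le_add_right _ _)
end

section
/- For all integers d ≥ 31 and all integers n with d + 2 ≤ n ≤ 5d, one has q_d^{(1)}(n) ≥ Q_{d−3}^{(1,-)}(n). -/
/-! A partition counted by `Q_{d-3}^{(1,-)}(n)` has parts `1`, `k * d + 1` with `k ≥ 1`, and
`k * d - 1` with `k ≥ 2`. Each part `k * d ± 1` other than `1` is at least `k * (d - 1/2)`, so the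
sum of the `k`'s is at most `W` as soon as `n < (W + 1) * (d - 1/2)`. Listing the `k`'s of either
sign gives two partitions; the second has no part `1`, so parts `1` can be added to it to bring the
total to exactly `W`, and nothing is lost. Hence `Q_{d-3}^{(1,-)}(n)` is at most the number of
bipartitions of `W`, a constant, whereas the partitions of `n` into at most two parts differing by
at least `d` already number `⌊(n - d) / 2⌋ + 1`. -/

/-- Bipartitions of `W`: pairs of partitions of total size `W`. They bound the number of partitions
into parts congruent to `±1`, the two components collecting the two residue classes. -/
abbrev Bipartition (W : ℕ) : Type :=
  Σ ij : Finset.HasAntidiagonal.antidiagonal W, ij.1.1.Partition × ij.1.2.Partition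

/-- The vectors `i ↦ i * cᵢ` of total `n`: a copy of the partitions of `n`, with `cᵢ` the
multiplicity of `i`, whose cardinality, unlike that of `n.Partition`, evaluates in the kernel. -/
def weightedMultiplicities (n : ℕ) : Finset (ℕ →₀ ℕ) :=
  ((Finset.Icc 1 n).finsuppAntidiag n).filter fun f => ∀ i ∈ Finset.Icc 1 n, i ∣ f i

theorem card_partition_le (n : ℕ) :
    Fintype.card n.Partition ≤ (weightedMultiplicities n).card :=
  Finset.card_le_card_of_injOn Nat.Partition.toFinsuppAntidiag
    (fun p _ => Finset.mem_filter.2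
      ⟨p.toFinsuppAntidiag_mem_finsuppAntidiag, fun _ _ => Nat.dvd_mul_left _ _⟩)
    (Nat.Partition.toFinsuppAntidiag_injective n).injOn

theorem card_bipartition_le (W : ℕ) :
    Fintype.card (Bipartition W) ≤ ∑ ij ∈ Finset.HasAntidiagonal.antidiagonal W,
      (weightedMultiplicities ij.1).card * (weightedMultiplicities ij.2).card := by
  rw [Fintype.card_sigma, ← Finset.sum_coe_sort (Finset.HasAntidiagonal.antidiagonal W)
    fun ij => (weightedMultiplicities ij.1).card * (weightedMultiplicities ij.2).card]
  refine Finset.sum_le_sum fun ij _ => ?_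
  rw [Fintype.card_prod]
  exact Nat.mul_le_mul (card_partition_le _) (card_partition_le _)

theorem card_bipartition_one_le : Fintype.card (Bipartition 1) ≤ 2 :=
  (card_bipartition_le 1).trans (by decide +kernel)

theorem card_bipartition_two_le : Fintype.card (Bipartition 2) ≤ 5 :=
  (card_bipartition_le 2).trans (by decide +kernel)

theorem card_bipartition_three_le : Fintype.card (Bipartition 3) ≤ 10 :=
  (card_bipartition_le 3).trans (by decide +kernel)

theorem card_bipartition_four_le : Fintype.card (Bipartition 4) ≤ 20 :=
  (card_bipartition_le 4).trans (by decide +kernel)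

theorem card_bipartition_five_le : Fintype.card (Bipartition 5) ≤ 36 :=
  (card_bipartition_le 5).trans (by decide +kernel)

/-- The multiset of the parts `k * m + 1` and `k * m - 1`, where `k` runs over the first and the
second component of `b` respectively. Parts `1` of the second component are padding and are
ignored: the part `m - 1` which they would stand for is the excluded one. -/
def Bipartition.residueParts {W : ℕ} (m : ℕ) (b : Bipartition W) : Multiset ℕ :=
  b.2.1.parts.map (fun k => k * m + 1) +
    (b.2.2.parts.filter (· ≠ 1)).map (fun k => k * m - 1)

theorem exists_eq_mul_add_one {m x : ℕ} (hm : m ≠ 1) (hx : x ≡ 1 [MOD m]) (hx1 : x ≠ 1) :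
    ∃ k, 0 < k ∧ x = k * m + 1 := by
  have hpos : 1 ≤ x := by
    by_contra! h
    obtain rfl : x = 0 := by omega
    exact hm (Nat.dvd_one.1 ((Nat.modEq_zero_iff_dvd).1 hx.symm))
  obtain ⟨k, hk⟩ := (Nat.modEq_iff_dvd' hpos).1 hx.symm
  refine ⟨k, Nat.pos_of_ne_zero ?_, by rw [mul_comm k m]; omega⟩
  rintro rfl
  omega

theorem exists_eq_mul_sub_one {m x : ℕ} (hx : x + 1 ≡ 0 [MOD m]) (hxm : x ≠ m - 1) :
    ∃ k, 2 ≤ k ∧ x = k * m - 1 := by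
  obtain ⟨k, hk⟩ := (Nat.modEq_zero_iff_dvd).1 hx
  refine ⟨k, ?_, by rw [mul_comm k m]; omega⟩
  by_contra! h
  interval_cases k <;> omega

theorem exists_residue_decomposition {m : ℕ} (hm : m ≠ 1) {s : Multiset ℕ}
    (hs : ∀ x ∈ s, x ≡ 1 [MOD m] ∨ x + 1 ≡ 0 [MOD m]) (hs1 : ∀ x ∈ s, x ≠ 1)
    (hsm : ∀ x ∈ s, x ≠ m - 1) :
    ∃ t u : Multiset ℕ, (∀ k ∈ t, 0 < k) ∧ (∀ k ∈ u, 2 ≤ k) ∧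
      s = t.map (fun k => k * m + 1) + u.map (fun k => k * m - 1) := by
  induction s using Multiset.induction with
  | empty => exact ⟨0, 0, by simp⟩
  | cons x s ih =>
    simp only [Multiset.forall_mem_cons] at hs hs1 hsm
    obtain ⟨t, u, ht, hu, rfl⟩ := ih hs.2 hs1.2 hsm.2
    rcases hs.1 with hx | hx
    · obtain ⟨k, hk, rfl⟩ := exists_eq_mul_add_one hm hx hs1.1
      exact ⟨k ::ₘ t, u, Multiset.forall_mem_cons.2 ⟨hk, ht⟩, hu, by simp⟩
    · obtain ⟨k, hk, rfl⟩ := exists_eq_mul_sub_one hx hsm.1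
      exact ⟨t, k ::ₘ u, ht, Multiset.forall_mem_cons.2 ⟨hk, hu⟩, by simp⟩

theorem sum_mul_le_mul_sum_map {R : Type*} [Semiring R] [PartialOrder R] [IsOrderedAddMonoid R]
    {f : R → R} {c e : R} {s : Multiset R}
    (h : ∀ k ∈ s, k * c ≤ e * f k) : s.sum * c ≤ e * (s.map f).sum := by
  rw [← Multiset.map_id' s, ← Multiset.sum_map_mul_right, Multiset.map_id',
    ← Multiset.sum_map_mul_left]
  exact Multiset.sum_map_le_sum_map _ _ h

theorem sum_add_sum_le_of_two_mul_sum_lt {m W : ℕ} {t u : Multiset ℕ} (hu : ∀ k ∈ u, 2 ≤ k)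
    (hW : 2 * (t.map (fun k => k * m + 1) + u.map (fun k => k * m - 1)).sum <
      (W + 1) * (2 * m - 1)) : t.sum + u.sum ≤ W := by
  have ht : t.sum * (2 * m - 1) ≤ 2 * (t.map fun k => k * m + 1).sum :=
    sum_mul_le_mul_sum_map fun k _ => by
      rw [Nat.mul_sub, mul_left_comm]
      omega
  -- The deficit `2` of `2 * (k * m - 1)` is made up for by `k ≥ 2`.
  have hu : u.sum * (2 * m - 1) ≤ 2 * (u.map fun k => k * m - 1).sum :=
    sum_mul_le_mul_sum_map fun k hk => by
      rw [Nat.mul_sub, mul_left_comm]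
      have := hu k hk
      omega
  refine Nat.lt_succ_iff.1 (lt_of_mul_lt_mul_right (a := 2 * m - 1) ?_ (Nat.zero_le _))
  calc (t.sum + u.sum) * (2 * m - 1)
      ≤ 2 * (t.map fun k => k * m + 1).sum + 2 * (u.map fun k => k * m - 1).sum :=
        (add_mul _ _ _).trans_le (add_le_add ht hu)
    _ < (W + 1) * (2 * m - 1) := by rwa [← mul_add, ← Multiset.sum_add]

theorem exists_residueParts_eq_map_add_map {W : ℕ} (m : ℕ) {t u : Multiset ℕ}
    (ht : ∀ k ∈ t, 0 < k) (hu : ∀ k ∈ u, 2 ≤ k) (hW : t.sum + u.sum ≤ W) :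
    ∃ b : Bipartition W,
      b.residueParts m = t.map (fun k => k * m + 1) + u.map (fun k => k * m - 1) := by
  let padded : Multiset ℕ := u + Multiset.replicate (W - (t.sum + u.sum)) 1
  have hpos : ∀ k ∈ padded, 0 < k := fun k hk => by
    rcases Multiset.mem_add.1 hk with hk | hk
    · exact two_pos.trans_le (hu k hk)
    · exact (Multiset.eq_of_mem_replicate hk).symm ▸ one_pos
  have htotal : t.sum + padded.sum = W := by
    simp only [padded, Multiset.sum_add, Multiset.sum_replicate, smul_eq_mul, mul_one]
    omega
  have hfilter : padded.filter (· ≠ 1) = u := by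
    rw [Multiset.filter_add,
      Multiset.filter_eq_self.2 fun k hk => (one_lt_two.trans_le (hu k hk)).ne',
      Multiset.filter_eq_nil.2 fun k hk => not_not.2 (Multiset.eq_of_mem_replicate hk), add_zero]
  exact ⟨⟨⟨(t.sum, padded.sum), Finset.HasAntidiagonal.mem_antidiagonal.2 htotal⟩,
    ⟨t, fun {k} => ht k, rfl⟩, ⟨padded, fun {k} => hpos k, rfl⟩⟩,
    by rw [Bipartition.residueParts, hfilter]⟩

theorem exists_residueParts_eq {m W : ℕ} (hm : m ≠ 1) {s : Multiset ℕ}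
    (hs : ∀ x ∈ s, x ≡ 1 [MOD m] ∨ x + 1 ≡ 0 [MOD m]) (hs1 : ∀ x ∈ s, x ≠ 1)
    (hsm : ∀ x ∈ s, x ≠ m - 1) (hW : 2 * s.sum < (W + 1) * (2 * m - 1)) :
    ∃ b : Bipartition W, b.residueParts m = s := by
  obtain ⟨t, u, ht, hu, rfl⟩ := exists_residue_decomposition hm hs hs1 hsm
  exact exists_residueParts_eq_map_add_map m ht hu (sum_add_sum_le_of_two_mul_sum_lt hu hW)

theorem replicate_count_add_filter_ne {α : Type*} [DecidableEq α] (s : Multiset α) (c : α) :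
    Multiset.replicate (s.count c) c + s.filter (· ≠ c) = s := by
  rw [← Multiset.filter_eq', Multiset.filter_add_not]

theorem count_nsmul_add_sum_filter_ne {M : Type*} [AddCommMonoid M] [DecidableEq M]
    (s : Multiset M) (c : M) : s.count c • c + (s.filter (· ≠ c)).sum = s.sum := by
  rw [← Multiset.sum_replicate, ← Multiset.sum_add, replicate_count_add_filter_ne]

theorem partition_eq_of_filter_ne_eq {n c : ℕ} (hc : 0 < c) {p q : n.Partition}
    (h : p.parts.filter (· ≠ c) = q.parts.filter (· ≠ c)) : p = q := by
  have hcount : p.parts.count c = q.parts.count c := by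
    have hsum : p.parts.count c • c + (q.parts.filter (· ≠ c)).sum =
        q.parts.count c • c + (q.parts.filter (· ≠ c)).sum := by
      rw [← h, count_nsmul_add_sum_filter_ne, h, count_nsmul_add_sum_filter_ne, p.parts_sum,
        q.parts_sum]
    exact Nat.eq_of_mul_eq_mul_right hc (Nat.add_right_cancel hsum)
  ext1
  rw [← replicate_count_add_filter_ne p.parts c, ← replicate_count_add_filter_ne q.parts c,
    hcount, h]

theorem congMinusCount_one_le_card_bipartition {d n W : ℕ}
    (hW : 2 * n < (W + 1) * (2 * (d + 3) - 1)) :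
    congMinusCount d 1 n ≤ Fintype.card (Bipartition W) := by
  rw [congMinusCount, ← Nat.card_eq_fintype_card]
  have hexists : ∀ p : {p : n.Partition //
      (∀ x ∈ p.parts, x ≡ 1 [MOD d + 3] ∨ x + 1 ≡ 0 [MOD d + 3]) ∧
      ∀ x ∈ p.parts, x ≠ d + 3 - 1}, ∃ b : Bipartition W,
      b.residueParts (d + 3) = p.1.parts.filter (· ≠ 1) := by
    rintro ⟨p, hres, hne⟩
    have hle : (p.parts.filter (· ≠ 1)).sum ≤ n :=
      (Nat.le_add_left _ _).trans_eq ((count_nsmul_add_sum_filter_ne _ 1).trans p.parts_sum)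
    exact exists_residueParts_eq (by omega)
      (fun x hx => hres x (Multiset.mem_of_mem_filter hx))
      (fun x hx => (Multiset.mem_filter.1 hx).2)
      (fun x hx => hne x (Multiset.mem_of_mem_filter hx))
      ((Nat.mul_le_mul_left 2 hle).trans_lt hW)
  choose f hf using hexists
  refine Nat.card_le_card_of_injective f fun p q hpq => Subtype.ext ?_
  exact partition_eq_of_filter_ne_eq one_pos (by rw [← hf p, ← hf q, hpq])

/-- The partition of `n` into the two parts `i` and `n - i`. -/
def pairPartition {n i : ℕ} (hi : 0 < i) (hin : i < n) : n.Partition where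
  parts := {i, n - i}
  parts_pos := by
    simp only [Multiset.insert_eq_cons, Multiset.mem_cons, Multiset.mem_singleton]
    omega
  parts_sum := by
    rw [Multiset.insert_eq_cons, Multiset.sum_cons, Multiset.sum_singleton]
    omega

theorem mem_pairPartition_parts {n i x : ℕ} (hi : 0 < i) (hin : i < n) :
    x ∈ (pairPartition hi hin).parts ↔ x = i ∨ x = n - i := by
  simp only [pairPartition, Multiset.insert_eq_cons, Multiset.mem_cons, Multiset.mem_singleton]

theorem isChain_sort_pair {i j d : ℕ} (h : i + d ≤ j) :
    List.IsChain (fun x y => x + d ≤ y) (({i, j} : Multiset ℕ).sort (· ≤ ·)) := by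
  have hsort : ({i, j} : Multiset ℕ).sort (· ≤ ·) = [i, j] := by
    rw [Multiset.insert_eq_cons, Multiset.sort_cons, Multiset.sort_singleton]
    simp only [Multiset.mem_singleton, forall_eq]
    omega
  rw [hsort]
  exact List.isChain_pair.2 h

theorem pair_sub_injOn (n : ℕ) :
    Set.InjOn (fun i => ({i, n - i} : Multiset ℕ)) {i | 2 * i ≤ n} := by
  intro i hi j hj h
  change 2 * i ≤ n at hi
  change 2 * j ≤ n at hj
  have hpair : ({i, n - i} : Multiset ℕ) = {j, n - j} := h
  have hmem : i ∈ ({j, n - j} : Multiset ℕ) := hpair ▸ Multiset.mem_cons_self i {n - i}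
  simp only [Multiset.insert_eq_cons, Multiset.mem_cons, Multiset.mem_singleton] at hmem
  omega

theorem le_gapCount {d a n : ℕ} (ha : 0 < a) (han : a ≤ n) :
    (n - d) / 2 + 1 - a + 1 ≤ gapCount d a n := by
  have hcard : Nat.card (Option (Finset.Icc a ((n - d) / 2))) = (n - d) / 2 + 1 - a + 1 := by
    rw [Finite.card_option, Nat.card_eq_finsetCard, Nat.card_Icc]
  have hgap : ∀ i : Finset.Icc a ((n - d) / 2), a ≤ i.1 ∧ i.1 + d ≤ n - i.1 := fun i => by
    have := Finset.mem_Icc.1 i.2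
    omega
  have hsingle : (Nat.Partition.indiscrete n).parts = {n} :=
    Nat.Partition.indiscrete_parts (ha.trans_le han).ne'
  rw [← hcard, gapCount]
  refine Nat.card_le_card_of_injective (fun o => o.elim
    ⟨Nat.Partition.indiscrete n,
      fun x hx => han.trans_eq (Multiset.mem_singleton.1 (hsingle ▸ hx)).symm,
      by rw [hsingle, Multiset.sort_singleton]; exact List.isChain_singleton n⟩
    fun i => ⟨pairPartition (i := i) (by grind) (by grind), by grind [mem_pairPartition_parts],
      isChain_sort_pair (hgap i).2⟩) ?_
  rintro (_ | i) (_ | j) h <;> have hparts := congrArg (Nat.Partition.parts ∘ Subtype.val) h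
  · rfl
  · exact absurd (congrArg Multiset.card (hsingle.symm.trans hparts)) (by simp [pairPartition])
  · exact absurd (congrArg Multiset.card (hparts.trans hsingle)) (by simp [pairPartition])
  · exact congrArg some (Subtype.ext (pair_sub_injOn n (by grind) (by grind) hparts))

theorem stmt8_general {d n : ℕ} (hd : 18 ≤ d) (hn1 : d + 2 ≤ n) (hn2 : n + 4 ≤ 6 * d) :
    congMinusCount (d - 3) 1 n ≤ gapCount d 1 n := by
  refine le_trans ?_ (le_gapCount one_pos (by omega))
  obtain ⟨W, hWn, hnW⟩ : ∃ W, W * (2 * d - 1) ≤ 2 * n ∧ 2 * n < (W + 1) * (2 * d - 1) :=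
    ⟨2 * n / (2 * d - 1), Nat.div_mul_le_self _ _,
      (Nat.lt_mul_div_succ _ (by omega)).trans_eq (mul_comm _ _)⟩
  have hcong : congMinusCount (d - 3) 1 n ≤ Fintype.card (Bipartition W) :=
    congMinusCount_one_le_card_bipartition (by rwa [Nat.sub_add_cancel (by omega)])
  have hW5 : W < 6 := by
    by_contra! h
    have := Nat.mul_le_mul_right (2 * d - 1) h
    omega
  interval_cases W
  · omega
  · exact hcong.trans (card_bipartition_one_le.trans (by omega))
  · exact hcong.trans (card_bipartition_two_le.trans (by omega))
  · exact hcong.trans (card_bipartition_three_le.trans (by omega))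
  · exact hcong.trans (card_bipartition_four_le.trans (by omega))
  · exact hcong.trans (card_bipartition_five_le.trans (by omega))

theorem stmt8 (d n : ℕ) (hd : 31 ≤ d) (hn1 : d + 2 ≤ n) (hn2 : n ≤ 5 * d) :
    congMinusCount (d - 3) 1 n ≤ gapCount d 1 n :=
  stmt8_general (by omega) hn1 (by omega)
end

section
/- For all integers n ≥ 1, one has q_1^{(3)}(n) ≥ Q_1^{(3,-)}(n); that is, the number of partitions of n into distinct parts each at least 3 is at least the number of partitions of n into parts congruent to ±3 modulo 4 none of which equals 1. -/
/-!
By Euler's theorem, partitions into odd parts have generating function `∏_{k ≥ 1} (1 + X ^ k)`.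
Forbidding the odd part `1` multiplies this by `1 - X`, which merges with the factors of the
distinct parts `1` and `2`, since `(1 - X) (1 + X) (1 + X ^ 2) = 1 - X ^ 4`. Hence
`∑ Q_1^{(3,-)}(n) X ^ n = (1 - X ^ 4) ∏_{k ≥ 3} (1 + X ^ k) = (1 - X ^ 4) ∑ q_1^{(3)}(n) X ^ n`,
so the two counts at `n` differ by `q_1^{(3)}(n - 4)`, which is nonnegative.
-/

open PowerSeries

/-- The generating function, in the variable `X`, of the partitions whose multiset of parts
satisfies `Q`. The coefficients are integers, so that series can be subtracted. -/
noncomputable def partitionSeries (Q : Multiset ℕ → Prop) : ℤ⟦X⟧ :=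
  PowerSeries.mk fun n ↦ (Nat.card {p : n.Partition // Q p.parts} : ℤ)

/-- The generating function `∏_{k ∈ A, k > 0} (1 - X ^ k)⁻¹` of the partitions into parts
from `A`. -/
noncomputable def partsInSeries (A : Set ℕ) : ℤ⟦X⟧ :=
  partitionSeries fun s ↦ ∀ x ∈ s, x ∈ A

/-- The generating function `∏_{k ∈ A, k > 0} (1 + X ^ k)` of the partitions into distinct parts
from `A`. -/
noncomputable def distinctPartsInSeries (A : Set ℕ) : ℤ⟦X⟧ :=
  partitionSeries fun s ↦ s.Nodup ∧ ∀ x ∈ s, x ∈ A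

theorem coeff_partitionSeries (Q : Multiset ℕ → Prop) (n : ℕ) :
    (partitionSeries Q).coeff n = Nat.card {p : n.Partition // Q p.parts} :=
  coeff_mk _ _

theorem card_partition_mem_parts (Q : Multiset ℕ → Prop) {k : ℕ} (hk : 0 < k) (n : ℕ) :
    Nat.card {p : n.Partition // Q p.parts ∧ k ∈ p.parts} =
      if k ≤ n then Nat.card {p : (n - k).Partition // Q (k ::ₘ p.parts)} else 0 := by
  split_ifs with hkn
  · let e := Nat.Partition.partitionWithPartEquiv hk hkn
    calc Nat.card {p : n.Partition // Q p.parts ∧ k ∈ p.parts}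
        = Nat.card {p : {p : n.Partition // k ∈ p.parts} // Q p.1.parts} :=
          Nat.card_congr <| (Equiv.subtypeEquivRight fun _ ↦ and_comm).trans
            (Equiv.subtypeSubtypeEquivSubtypeInter _ _).symm
      _ = Nat.card {p : (n - k).Partition // Q (e.symm p).1.parts} :=
          Nat.card_congr <| e.subtypeEquiv fun p ↦ by rw [e.symm_apply_apply]
      _ = Nat.card {p : (n - k).Partition // Q (k ::ₘ p.parts)} := by
          simp only [e, Nat.Partition.partitionWithPartEquiv_symm_apply_parts]
  · have : IsEmpty {p : n.Partition // Q p.parts ∧ k ∈ p.parts} :=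
      ⟨fun p ↦ hkn (Nat.Partition.le_of_mem_parts p.2.2)⟩
    exact Nat.card_of_isEmpty

theorem partitionSeries_eq_notMem_add (Q : Multiset ℕ → Prop) {k : ℕ} (hk : 0 < k) :
    partitionSeries Q =
      partitionSeries (fun s ↦ Q s ∧ k ∉ s) + X ^ k * partitionSeries (fun s ↦ Q (k ::ₘ s)) := by
  classical
  ext n
  have hsplit : Nat.card {p : n.Partition // Q p.parts} =
      Nat.card {p : n.Partition // Q p.parts ∧ k ∉ p.parts} +
        Nat.card {p : n.Partition // Q p.parts ∧ k ∈ p.parts} := by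
    simp only [Nat.card_eq_fintype_card, Fintype.card_subtype, ← Finset.filter_filter]
    rw [add_comm, Finset.card_filter_add_card_filter_not]
  simp only [map_add, coeff_X_pow_mul', coeff_partitionSeries]
  rw [hsplit, card_partition_mem_parts Q hk]
  simp only [Nat.cast_add, Nat.cast_ite, Nat.cast_zero]

theorem partsInSeries_diff_singleton {A : Set ℕ} {k : ℕ} (hk : 0 < k) (hkA : k ∈ A) :
    partsInSeries (A \ {k}) = (1 - X ^ k) * partsInSeries A := by
  have hsplit : partsInSeries A = partsInSeries (A \ {k}) + X ^ k * partsInSeries A := by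
    have hwithout (s : Multiset ℕ) : (∀ x ∈ s, x ∈ A) ∧ k ∉ s ↔ ∀ x ∈ s, x ∈ A \ {k} := by
      grind
    have hcons (s : Multiset ℕ) : (∀ x ∈ k ::ₘ s, x ∈ A) ↔ ∀ x ∈ s, x ∈ A := by
      grind
    simpa only [partsInSeries, hwithout, hcons] using
      partitionSeries_eq_notMem_add (∀ x ∈ ·, x ∈ A) hk
  linear_combination -hsplit

theorem distinctPartsInSeries_eq_one_add_mul {A : Set ℕ} {k : ℕ} (hk : 0 < k) (hkA : k ∈ A) :
    distinctPartsInSeries A = (1 + X ^ k) * distinctPartsInSeries (A \ {k}) := by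
  have hwithout (s : Multiset ℕ) :
      (s.Nodup ∧ ∀ x ∈ s, x ∈ A) ∧ k ∉ s ↔ s.Nodup ∧ ∀ x ∈ s, x ∈ A \ {k} := by
    grind
  have hcons (s : Multiset ℕ) :
      ((k ::ₘ s).Nodup ∧ ∀ x ∈ k ::ₘ s, x ∈ A) ↔ s.Nodup ∧ ∀ x ∈ s, x ∈ A \ {k} := by
    grind [Multiset.nodup_cons]
  rw [one_add_mul]
  simpa only [distinctPartsInSeries, hwithout, hcons] using
    partitionSeries_eq_notMem_add (fun s ↦ s.Nodup ∧ ∀ x ∈ s, x ∈ A) hk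

theorem partsInSeries_odd : partsInSeries {k | Odd k} = distinctPartsInSeries {k | 0 < k} := by
  ext n
  have hpos (p : n.Partition) : (∀ x ∈ p.parts, 0 < x) ↔ True :=
    iff_true_intro fun _ ↦ p.parts_pos
  have euler := Nat.Partition.card_odds_eq_card_distincts n
  simp only [Nat.Partition.odds, Nat.Partition.restricted, Nat.Partition.distincts,
    Nat.not_even_iff_odd] at euler
  simpa [partsInSeries, distinctPartsInSeries, coeff_partitionSeries, hpos,
    Fintype.card_subtype] using euler

theorem partsInSeries_odd_diff_one (m : ℕ) :
    partsInSeries ({k | Odd k} \ {1}) =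
      (1 - X ^ 2 ^ m) * distinctPartsInSeries {k | 0 < k ∧ ∀ i < m, k ≠ 2 ^ i} := by
  induction m with
  | zero =>
    simpa [partsInSeries_odd] using partsInSeries_diff_singleton one_pos (A := {k | Odd k}) odd_one
  | succ m ih =>
    have hmem : 2 ^ m ∈ {k | 0 < k ∧ ∀ i < m, k ≠ 2 ^ i} :=
      ⟨by positivity, fun i hi ↦ (Nat.pow_lt_pow_right one_lt_two hi).ne'⟩
    have hdiff : {k | 0 < k ∧ ∀ i < m + 1, k ≠ 2 ^ i} =
        {k | 0 < k ∧ ∀ i < m, k ≠ 2 ^ i} \ {2 ^ m} := by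
      ext k
      simp only [Set.mem_ofPred_eq, Set.mem_sdiff, Set.mem_singleton_iff,
        Nat.forall_lt_succ_right, and_assoc]
    rw [ih, distinctPartsInSeries_eq_one_add_mul (by positivity) hmem, hdiff]
    ring

theorem sort_isChain_lt_iff_nodup {α : Type*} [LinearOrder α] (s : Multiset α) :
    (s.sort (· ≤ ·)).IsChain (· < ·) ↔ s.Nodup := by
  have hle : (s.sort (· ≤ ·)).SortedLE := (s.pairwise_sort (· ≤ ·)).sortedLE
  rw [← List.sortedLT_iff_isChain, List.sortedLT_iff_nodup_and_sortedLE, and_iff_left hle,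
    ← Multiset.coe_nodup, Multiset.sort_eq]

theorem coeff_distinctPartsInSeries_Ici (a n : ℕ) :
    (distinctPartsInSeries (Set.Ici a)).coeff n = gapCount 1 a n := by
  rw [distinctPartsInSeries, coeff_partitionSeries, gapCount]
  refine congrArg Nat.cast <| Nat.card_congr <| Equiv.subtypeEquivRight fun p ↦ ?_
  exact and_comm.trans (and_congr_right' (sort_isChain_lt_iff_nodup p.parts).symm)

theorem coeff_partsInSeries_odd_diff_one (n : ℕ) :
    (partsInSeries ({k | Odd k} \ {1})).coeff n = congMinusCount 1 3 n := by
  have hodd (x : ℕ) : x ≡ 3 [MOD 4] ∨ x + 3 ≡ 0 [MOD 4] ↔ Odd x := by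
    rw [Nat.odd_iff, Nat.ModEq, Nat.ModEq]
    omega
  simp [partsInSeries, coeff_partitionSeries, congMinusCount, hodd, forall_and]

theorem stmt10_general (n : ℕ) :
    congMinusCount 1 3 n + (if 4 ≤ n then gapCount 1 3 (n - 4) else 0) = gapCount 1 3 n := by
  have hset : {k : ℕ | 0 < k ∧ ∀ i < 2, k ≠ 2 ^ i} = Set.Ici 3 := by
    ext k
    have hpow : (∀ i < 2, k ≠ 2 ^ i) ↔ k ≠ 1 ∧ k ≠ 2 := by
      simp [Nat.le_one_iff_eq_zero_or_eq_one]
    simp only [Set.mem_ofPred_eq, Set.mem_Ici, hpow]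
    omega
  have hcoeff := congrArg (coeff n) (partsInSeries_odd_diff_one 2)
  rw [hset, sub_mul, one_mul, map_sub, show 2 ^ 2 = 4 from rfl, coeff_X_pow_mul'] at hcoeff
  simp only [coeff_partsInSeries_odd_diff_one, coeff_distinctPartsInSeries_Ici] at hcoeff
  split_ifs at hcoeff ⊢ <;> omega

theorem stmt10 (n : ℕ) (hn : 1 ≤ n) :
    congMinusCount 1 3 n ≤ gapCount 1 3 n :=
  (Nat.le_add_right _ _).trans_eq (stmt10_general n)
end

section
/- For all integers n ≥ 1, one has q_2^{(3)}(n) ≥ Q_2^{(3,-)}(n); that is, the number of partitions of n into parts each at least 3 with consecutive parts differing by at least 2 is at least the number of partitions of n into parts congruent to ±3 modulo 5 none of which equals 2. -/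
/-!
Let `G_a` be the generating function of the partitions with parts at least `a` and differences at
least `2`, and `C` that of the partitions with parts congruent to `±2` modulo `5`. Deleting the
part `2` on both sides turns the claim into a comparison of `(1 - X ^ 2) C` with
`G_3 = G_2 - X ^ 2 G_4`. Since `C = G_2` by the second Rogers–Ramanujan identity, the difference of
the two is `X ^ 2 (G_2 - G_4)`, whose coefficients are nonnegative.

The second Rogers–Ramanujan identity follows Rogers and Ramanujan: `(q; q)_∞ G_(k + 1)` and an
alternating series satisfy the same recurrence `f k = f (k + 1) + q ^ (k + 1) f (k + 2)`, hence
agree, and the Jacobi triple product evaluates the alternating series at `k = 1`. Working modulo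
`X ^ M` makes `q` nilpotent, so every series and product involved is finite.
-/

namespace RogersRamanujan

open Finset PowerSeries

section Partitions

/-- The generating function of the partitions whose multiset of parts satisfies `P`. Its
coefficients are taken in `ℤ` so that it can be multiplied by factors `1 - X ^ b`. -/
noncomputable def partitionSeries (P : Multiset ℕ → Prop) : ℤ⟦X⟧ :=
  .mk fun n ↦ (Nat.card {p : n.Partition // P p.parts} : ℤ)

lemma coeff_partitionSeries (P : Multiset ℕ → Prop) (n : ℕ) :
    coeff n (partitionSeries P) = Nat.card {p : n.Partition // P p.parts} :=
  coeff_mk _ _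

lemma partitionSeries_congr {P Q : Multiset ℕ → Prop} (h : ∀ s, P s ↔ Q s) :
    partitionSeries P = partitionSeries Q :=
  congrArg partitionSeries (funext fun s ↦ propext (h s))

/-- Removing one part equal to `b`, as an equivalence. -/
def erasePartEquiv {b : ℕ} (hb : 0 < b) (m : ℕ) (P : Multiset ℕ → Prop) :
    {p : (m + b).Partition // b ∈ p.parts ∧ P p.parts} ≃
      {p : m.Partition // P (b ::ₘ p.parts)} where
  toFun p := ⟨⟨p.1.parts.erase b, fun h ↦ p.1.parts_pos (Multiset.mem_of_mem_erase h), by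
      have := Multiset.sum_erase p.2.1
      have := p.1.parts_sum
      omega⟩, by simpa only [Multiset.cons_erase p.2.1] using p.2.2⟩
  invFun p := ⟨⟨b ::ₘ p.1.parts, fun h ↦ (Multiset.mem_cons.1 h).elim (· ▸ hb) p.1.parts_pos, by
      rw [Multiset.sum_cons, p.1.parts_sum, add_comm]⟩, Multiset.mem_cons_self _ _, p.2⟩
  left_inv p := Subtype.ext (Nat.Partition.ext (Multiset.cons_erase p.2.1))
  right_inv p := Subtype.ext (Nat.Partition.ext (Multiset.erase_cons_head _ _))

lemma partitionSeries_eq_add {b : ℕ} (hb : 0 < b) (P : Multiset ℕ → Prop) :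
    partitionSeries P = partitionSeries (fun s ↦ b ∉ s ∧ P s) +
      X ^ b * partitionSeries (fun s ↦ P (b ::ₘ s)) := by
  classical
  ext n
  have hsplit : Nat.card {p : n.Partition // P p.parts} =
      Nat.card {p : n.Partition // b ∉ p.parts ∧ P p.parts} +
        Nat.card {p : n.Partition // b ∈ p.parts ∧ P p.parts} := by
    simp only [Nat.card_eq_fintype_card, Fintype.card_subtype, and_comm (b := P _)]
    simp only [← Finset.filter_filter]
    exact (Finset.card_filter_add_card_filter_not _).symm.trans (add_comm _ _)
  rw [map_add, coeff_X_pow_mul']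
  simp only [coeff_partitionSeries, hsplit, Nat.cast_add]
  split_ifs with hbn
  · obtain ⟨m, rfl⟩ := Nat.exists_eq_add_of_le' hbn
    rw [Nat.card_congr (erasePartEquiv hb m P), Nat.add_sub_cancel]
  · have : IsEmpty {p : n.Partition // b ∈ p.parts ∧ P p.parts} :=
      ⟨fun p ↦ hbn (Nat.Partition.le_of_mem_parts p.2.1)⟩
    rw [Nat.card_of_isEmpty (α := {p : n.Partition // b ∈ p.parts ∧ P p.parts}), Nat.cast_zero]

lemma X_pow_dvd_partitionSeries_sub_one {P : Multiset ℕ → Prop} {M : ℕ} (h₀ : P 0)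
    (hM : ∀ s, P s → ∀ x ∈ s, 0 < x → M ≤ x) : X ^ M ∣ partitionSeries P - 1 := by
  refine X_pow_dvd_iff.2 fun n hn ↦ ?_
  rw [map_sub, coeff_partitionSeries, coeff_one]
  rcases eq_or_ne n 0 with rfl | hn₀
  · have : Unique {p : Nat.Partition 0 // P p.parts} :=
      { default := ⟨default, by simpa using h₀⟩
        uniq := fun p ↦ Subtype.ext (Subsingleton.elim _ _) }
    rw [Nat.card_unique, if_pos rfl, Nat.cast_one, sub_self]
  · have : IsEmpty {p : n.Partition // P p.parts} := by
      refine ⟨fun p ↦ ?_⟩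
      obtain ⟨x, hx⟩ := Multiset.exists_mem_of_ne_zero (s := p.1.parts) fun h ↦ hn₀ <| by
        rw [← p.1.parts_sum, h, Multiset.sum_zero]
      have := hM _ p.2 x hx (p.1.parts_pos hx)
      have := Nat.Partition.le_of_mem_parts hx
      omega
    simp [hn₀]

/-- The condition that the elements of `s` are at least `a` and differ pairwise by at least `d`,
as in `gapCount`. -/
def HasGaps (d a : ℕ) (s : Multiset ℕ) : Prop :=
  (∀ x ∈ s, a ≤ x) ∧ (s.sort (· ≤ ·)).IsChain (fun x y ↦ x + d ≤ y)

lemma coeff_partitionSeries_hasGaps (d a n : ℕ) :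
    coeff n (partitionSeries (HasGaps d a)) = gapCount d a n :=
  coeff_partitionSeries _ _

lemma HasGaps.anti {d a b : ℕ} (hab : a ≤ b) {s : Multiset ℕ} (hs : HasGaps d b s) :
    HasGaps d a s :=
  ⟨fun x hx ↦ hab.trans (hs.1 x hx), hs.2⟩

lemma gapCount_anti (d : ℕ) {a b : ℕ} (hab : a ≤ b) (n : ℕ) : gapCount d b n ≤ gapCount d a n :=
  Nat.card_mono (Set.toFinite {p : n.Partition | HasGaps d a p.parts}) fun _ ↦ HasGaps.anti hab

lemma notMem_and_hasGaps_iff {d a : ℕ} {s : Multiset ℕ} :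
    a ∉ s ∧ HasGaps d a s ↔ HasGaps d (a + 1) s := by
  refine ⟨fun ⟨ha, hs⟩ ↦ ⟨fun x hx ↦ (hs.1 x hx).lt_of_ne ?_, hs.2⟩,
    fun hs ↦ ⟨fun ha ↦ a.lt_irrefl (hs.1 a ha), hs.anti a.le_succ⟩⟩
  rintro rfl
  exact ha hx

lemma hasGaps_cons_iff {d a : ℕ} {s : Multiset ℕ} :
    HasGaps d a (a ::ₘ s) ↔ HasGaps d (a + d) s := by
  have : IsTrans ℕ (fun x y ↦ x + d ≤ y) := ⟨fun x y z _ _ ↦ by omega⟩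
  have hsort (h : ∀ x ∈ s, a ≤ x) : (a ::ₘ s).sort (· ≤ ·) = a :: s.sort (· ≤ ·) :=
    Multiset.sort_cons a s (· ≤ ·) h
  constructor
  · rintro ⟨ha, hs⟩
    rw [hsort fun x hx ↦ ha x (Multiset.mem_cons_of_mem hx), List.isChain_iff_pairwise,
      List.pairwise_cons] at hs
    exact ⟨fun x hx ↦ hs.1 x ((Multiset.mem_sort _).2 hx), hs.2.isChain⟩
  · rintro ⟨had, hs⟩
    have ha : ∀ x ∈ s, a ≤ x := fun x hx ↦ (Nat.le_add_right a d).trans (had x hx)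
    refine ⟨Multiset.forall_mem_cons.2 ⟨le_rfl, ha⟩, ?_⟩
    rw [hsort ha, List.isChain_iff_pairwise, List.pairwise_cons]
    exact ⟨fun x hx ↦ had x ((Multiset.mem_sort _).1 hx), List.isChain_iff_pairwise.1 hs⟩

lemma partitionSeries_hasGaps_eq_add (d : ℕ) {a : ℕ} (ha : 0 < a) :
    partitionSeries (HasGaps d a) = partitionSeries (HasGaps d (a + 1)) +
      X ^ a * partitionSeries (HasGaps d (a + d)) := by
  rw [partitionSeries_eq_add ha, partitionSeries_congr fun _ ↦ notMem_and_hasGaps_iff,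
    partitionSeries_congr fun _ ↦ hasGaps_cons_iff]

lemma X_pow_dvd_partitionSeries_hasGaps_sub_one (d : ℕ) {M a : ℕ} (h : M ≤ a) :
    X ^ M ∣ partitionSeries (HasGaps d a) - 1 :=
  X_pow_dvd_partitionSeries_sub_one ⟨by simp, by simp⟩ fun _ hs x hx _ ↦ h.trans (hs.1 x hx)

/-- The generating function of `rhoCount A`, the partitions with parts in `A`. -/
noncomputable def rhoSeries (A : Set ℕ) : ℤ⟦X⟧ := partitionSeries fun s ↦ ∀ x ∈ s, x ∈ A

lemma rhoSeries_mul_one_sub_X_pow {A : Set ℕ} {b : ℕ} (hb : 0 < b) (hbA : b ∈ A) :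
    rhoSeries A * (1 - X ^ b) = rhoSeries (A \ {b}) := by
  have hdel (s : Multiset ℕ) : (b ∉ s ∧ ∀ x ∈ s, x ∈ A) ↔ ∀ x ∈ s, x ∈ A \ {b} := by
    simp only [Set.mem_sdiff, Set.mem_singleton_iff, forall₂_and, and_comm (a := b ∉ s)]
    exact and_congr_right fun _ ↦
      ⟨fun h x hx hxb ↦ h (hxb ▸ hx), fun h hb ↦ h b hb rfl⟩
  have hcons (s : Multiset ℕ) : (∀ x ∈ b ::ₘ s, x ∈ A) ↔ ∀ x ∈ s, x ∈ A := by
    simp only [Multiset.forall_mem_cons, hbA, true_and]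
  have h := partitionSeries_eq_add hb fun s ↦ ∀ x ∈ s, x ∈ A
  rw [partitionSeries_congr hdel, partitionSeries_congr hcons, ← rhoSeries, ← rhoSeries] at h
  linear_combination h

lemma rhoSeries_mul_prod_one_sub_X_pow {A : Set ℕ} {s : Finset ℕ} (hs : ∀ b ∈ s, 0 < b ∧ b ∈ A) :
    rhoSeries A * ∏ b ∈ s, (1 - X ^ b) = rhoSeries (A \ s) := by
  induction s using Finset.induction_on with
  | empty => simp
  | insert b s hbs ih =>
    obtain ⟨⟨hb, hbA⟩, hs⟩ := (Finset.forall_mem_insert _ _ _).1 hs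
    have hbAs : b ∈ A \ (s : Set ℕ) := Set.mem_sdiff_of_mem hbA (mem_coe.not.2 hbs)
    rw [prod_insert hbs, mul_comm (1 - _), ← mul_assoc, ih hs, rhoSeries_mul_one_sub_X_pow hb hbAs,
      Set.sdiff_sdiff, Set.union_singleton, coe_insert]

lemma X_pow_dvd_rhoSeries_sub_one {A : Set ℕ} {M : ℕ} (hA : ∀ x ∈ A, 0 < x → M ≤ x) :
    X ^ M ∣ rhoSeries A - 1 :=
  X_pow_dvd_partitionSeries_sub_one (by simp) fun _ hs x hx ↦ hA x (hs x hx)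

/-- The residue classes of `a` and `-a` modulo `d + 3`: the parts counted by `congCount d a`. -/
def congParts (d a : ℕ) : Set ℕ := {x | x ≡ a [MOD d + 3] ∨ x + a ≡ 0 [MOD d + 3]}

lemma coeff_rhoSeries_congParts_sdiff (d a n : ℕ) :
    coeff n (rhoSeries (congParts d a \ {d + 3 - a})) = congMinusCount d a n := by
  rw [rhoSeries, coeff_partitionSeries, congMinusCount]
  simp only [← forall₂_and]
  rfl

end Partitions

section QSeries

variable {R : Type*} [CommRing R]

/-- The finite `q`-Pochhammer symbol `(a; q)_n`. -/
def qPochhammer (a q : R) (n : ℕ) : R := ∏ k ∈ range n, (1 - a * q ^ k)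

@[simp] lemma qPochhammer_zero (a q : R) : qPochhammer a q 0 = 1 := rfl

lemma qPochhammer_succ (a q : R) (n : ℕ) :
    qPochhammer a q (n + 1) = qPochhammer a q n * (1 - a * q ^ n) :=
  prod_range_succ _ _

lemma qPochhammer_succ' (a q : R) (n : ℕ) :
    qPochhammer a q (n + 1) = (1 - a) * qPochhammer (a * q) q n := by
  simp only [qPochhammer, prod_range_succ', pow_zero, mul_one, pow_succ', mul_assoc, mul_comm]

lemma qPochhammer_add (a q : R) (m n : ℕ) :
    qPochhammer a q (m + n) = qPochhammer a q m * qPochhammer (a * q ^ m) q n := by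
  simp only [qPochhammer, prod_range_add, pow_add, mul_assoc]

lemma qPochhammer_mul (a q : R) (d n : ℕ) :
    qPochhammer a q (d * n) = ∏ i ∈ range d, qPochhammer (a * q ^ i) (q ^ d) n := by
  induction n with
  | zero => simp
  | succ n ih =>
    rw [mul_add_one, qPochhammer_add, ih, qPochhammer, ← prod_mul_distrib]
    exact prod_congr rfl fun i _ ↦ by rw [qPochhammer_succ, ← pow_mul]; ring

lemma map_qPochhammer {S : Type*} [CommRing S] (f : R →+* S) (a q : R) (n : ℕ) :
    f (qPochhammer a q n) = qPochhammer (f a) (f q) n := by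
  simp only [qPochhammer, map_prod, map_sub, map_one, map_mul, map_pow]

lemma isUnit_qPochhammer {a : R} (ha : IsNilpotent a) (q : R) (n : ℕ) :
    IsUnit (qPochhammer a q n) :=
  IsUnit.prod_iff.2 fun k _ ↦ ((Commute.all a (q ^ k)).isNilpotent_mul_right ha).isUnit_one_sub

lemma qPochhammer_self_eq_of_pow_eq_zero {q : R} {M n : ℕ} (hq : q ^ M = 0) (hn : M ≤ n) :
    qPochhammer q q n = qPochhammer q q M := by
  induction n, hn using Nat.le_induction with
  | base => rfl
  | succ n hn ih =>
    rw [qPochhammer_succ, ih, ← pow_succ', pow_eq_zero_of_le (Nat.le_succ_of_le hn) hq, sub_zero,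
      mul_one]

/-- The Gaussian binomial coefficient, defined by the `q`-analogue of Pascal's rule. -/
def qBinom (q : R) : ℕ → ℕ → R
  | _, 0 => 1
  | 0, _ + 1 => 0
  | n + 1, k + 1 => qBinom q n k + q ^ (k + 1) * qBinom q n (k + 1)

@[simp] lemma qBinom_zero_right (q : R) (n : ℕ) : qBinom q n 0 = 1 := by cases n <;> rfl

lemma qBinom_succ_succ (q : R) (n k : ℕ) :
    qBinom q (n + 1) (k + 1) = qBinom q n k + q ^ (k + 1) * qBinom q n (k + 1) := rfl

lemma qBinom_eq_zero_of_lt (q : R) {n k : ℕ} (h : n < k) : qBinom q n k = 0 := by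
  induction n generalizing k with
  | zero => obtain ⟨k, rfl⟩ := Nat.exists_eq_add_one_of_ne_zero h.ne'; rfl
  | succ n ih =>
    obtain ⟨k, rfl⟩ := Nat.exists_eq_add_one_of_ne_zero (Nat.ne_zero_of_lt h)
    rw [qBinom_succ_succ, ih (by omega), ih (by omega), mul_zero, add_zero]

@[simp] lemma qBinom_self (q : R) (n : ℕ) : qBinom q n n = 1 := by
  induction n with
  | zero => rfl
  | succ n ih =>
    rw [qBinom_succ_succ, ih, qBinom_eq_zero_of_lt q n.lt_succ_self, mul_zero, add_zero]

lemma qBinom_add_mul_qPochhammer (q : R) (a b : ℕ) :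
    qBinom q (a + b) a * qPochhammer q q a * qPochhammer q q b = qPochhammer q q (a + b) := by
  induction a generalizing b with
  | zero => simp
  | succ a iha =>
    induction b with
    | zero => simp
    | succ b ihb =>
      have h := iha (b + 1)
      have e : a + 1 + b = a + (b + 1) := by omega
      rw [e] at ihb
      rw [show a + 1 + (b + 1) = a + (b + 1) + 1 by omega, qBinom_succ_succ,
        qPochhammer_succ q q (a + (b + 1))]
      rw [qPochhammer_succ q q a] at ihb ⊢
      rw [qPochhammer_succ q q b] at h ⊢
      linear_combination (1 - q ^ (a + 1)) * h + q ^ (a + 1) * (1 - q ^ (b + 1)) * ihb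

lemma qBinom_mul_qPochhammer_of_pow_eq_zero {q : R} {M n k l : ℕ} (hq : q ^ M = 0)
    (hk : M ≤ k) (hkn : M + k ≤ n) (hl : M ≤ l) : qBinom q n k * qPochhammer q q l = 1 := by
  obtain ⟨b, rfl⟩ := Nat.exists_eq_add_of_le (show k ≤ n by omega)
  have h := qBinom_add_mul_qPochhammer q k b
  rw [qPochhammer_self_eq_of_pow_eq_zero hq hk,
    qPochhammer_self_eq_of_pow_eq_zero hq (show M ≤ b by omega),
    qPochhammer_self_eq_of_pow_eq_zero hq (show M ≤ k + b by omega)] at h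
  rw [qPochhammer_self_eq_of_pow_eq_zero hq hl]
  exact (isUnit_qPochhammer ⟨M, hq⟩ q M).mul_right_cancel (h.trans (one_mul _).symm)

lemma qPochhammer_eq_sum_qBinom (x q : R) (n : ℕ) :
    qPochhammer x q n =
      ∑ k ∈ range (n + 1), (-x) ^ k * q ^ k.choose 2 * qBinom q n k := by
  induction n generalizing x with
  | zero => simp
  | succ n ih =>
    have hchoose (k : ℕ) : (k + 1).choose 2 = k + k.choose 2 := by
      rw [Nat.choose_succ_succ', Nat.choose_one_right]
    have hterm (k : ℕ) : (-x) ^ (k + 1) * q ^ (k + 1).choose 2 * qBinom q (n + 1) (k + 1) =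
        -x * ((-(x * q)) ^ k * q ^ k.choose 2 * qBinom q n k) +
          (-(x * q)) ^ (k + 1) * q ^ (k + 1).choose 2 * qBinom q n (k + 1) := by
      rw [qBinom_succ_succ, hchoose]
      ring
    have htop : ∑ k ∈ range (n + 1), (-(x * q)) ^ (k + 1) * q ^ (k + 1).choose 2 *
        qBinom q n (k + 1) + 1 = qPochhammer (x * q) q n := by
      rw [ih, sum_range_succ, qBinom_eq_zero_of_lt q n.lt_succ_self, sum_range_succ' _ n]
      simp
    rw [sum_range_succ', qPochhammer_succ']
    simp only [hterm, sum_add_distrib, ← mul_sum, ← ih]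
    simp only [pow_zero, Nat.choose_zero_succ, qBinom_zero_right, one_mul]
    linear_combination -htop

/-- The triangular number `j (j + 1) / 2` of an integer `j`. -/
def triangular (j : ℤ) : ℕ := (j * (j + 1) / 2).toNat

lemma two_mul_triangular (j : ℤ) : 2 * (triangular j : ℤ) = j * (j + 1) := by
  have h : 0 ≤ j * (j + 1) := by rcases le_or_gt 0 j with h | h <;> nlinarith
  rw [triangular, Int.toNat_of_nonneg (by omega)]
  exact Int.two_mul_ediv_two_of_even (Int.even_mul_succ_self j)

lemma le_triangular (j : ℤ) : j ≤ triangular j := by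
  have := two_mul_triangular j
  rcases lt_or_ge j 0 with h | h <;> nlinarith

lemma triangular_natCast (n : ℕ) : triangular n = (n + 1).choose 2 := by
  rw [Nat.choose_two_right, Nat.add_sub_cancel, mul_comm, triangular]
  norm_cast

lemma triangular_neg_natCast (n : ℕ) : triangular (-n) = n.choose 2 := by
  rcases n with _ | n
  · rfl
  · rw [← triangular_natCast, triangular, triangular]
    congr 2
    push_cast
    ring

/-- The `j`-th term of Ramanujan's theta series
`f (-x, -y) = ∑ (-1) ^ j x ^ (j (j + 1) / 2) y ^ (j (j - 1) / 2)`. -/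
def thetaTerm (x y : R) (j : ℤ) : R :=
  (-1) ^ j.natAbs * x ^ triangular j * y ^ triangular (-j)

lemma mul_thetaTerm (x y : R) (i n : ℕ) :
    -y * (x * y) ^ n * thetaTerm x y (i - n) = (x * y) ^ i * thetaTerm x y (i - (n + 1)) := by
  have hx : n + triangular (i - n) = i + triangular (i - (n + 1)) := by
    have h₁ := two_mul_triangular (i - n)
    have h₂ := two_mul_triangular (i - (n + 1))
    zify
    linarith
  have hy : n + triangular (-(i - n)) + 1 = i + triangular (-(i - (n + 1))) := by
    have h₁ := two_mul_triangular (-(i - n))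
    have h₂ := two_mul_triangular (-(i - (n + 1)))
    zify
    linarith
  have hsign : (-1 : R) ^ ((i : ℤ) - (n + 1)).natAbs = -(-1) ^ ((i : ℤ) - n).natAbs := by
    obtain h | h : ((i : ℤ) - (n + 1)).natAbs = ((i : ℤ) - n).natAbs + 1 ∨
        ((i : ℤ) - n).natAbs = ((i : ℤ) - (n + 1)).natAbs + 1 := by omega
    · rw [h, pow_succ, mul_neg_one]
    · rw [h, pow_succ, mul_neg_one, neg_neg]
  calc -y * (x * y) ^ n * thetaTerm x y (i - n)
    _ = -(-1) ^ ((i : ℤ) - n).natAbs * x ^ (n + triangular (i - n)) *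
          y ^ (n + triangular (-(i - n)) + 1) := by rw [thetaTerm]; ring
    _ = (x * y) ^ i * thetaTerm x y (i - (n + 1)) := by rw [hx, hy, thetaTerm, hsign]; ring

theorem jacobi_tripleProduct_finite (x y : R) (m n : ℕ) :
    qPochhammer x (x * y) m * qPochhammer y (x * y) n =
      ∑ i ∈ range (m + n + 1), thetaTerm x y (i - n) * qBinom (x * y) (m + n) i := by
  induction n with
  | zero =>
    have htheta (i : ℕ) : (-x) ^ i * (x * y) ^ i.choose 2 = thetaTerm x y i := by
      rw [thetaTerm, triangular_natCast, triangular_neg_natCast, Int.natAbs_natCast,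
        Nat.choose_succ_succ', Nat.choose_one_right]
      ring
    simp [qPochhammer_eq_sum_qBinom, htheta]
  | succ n ih =>
    set f : ℕ → R := fun i ↦ thetaTerm x y (i - (n + 1)) with hf
    set B : ℕ → R := qBinom (x * y) (m + n) with hB
    have hlow : ∑ i ∈ range (m + n + 1), thetaTerm x y (i - n) * B i =
        ∑ i ∈ range (m + n + 1), f (i + 1) * B i := by
      simp only [hf, Nat.cast_add_one, add_sub_add_right_eq_sub]
    have hhigh : -y * (x * y) ^ n * ∑ i ∈ range (m + n + 1), thetaTerm x y (i - n) * B i =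
        ∑ i ∈ range (m + n + 1), f (i + 1) * ((x * y) ^ (i + 1) * B (i + 1)) + f 0 :=
      calc -y * (x * y) ^ n * ∑ i ∈ range (m + n + 1), thetaTerm x y (i - n) * B i
        _ = ∑ i ∈ range (m + n + 1), f i * ((x * y) ^ i * B i) := by
          rw [mul_sum]
          exact sum_congr rfl fun i _ ↦ by rw [← mul_assoc, mul_thetaTerm]; ring
        _ = ∑ i ∈ range (m + n + 2), f i * ((x * y) ^ i * B i) := by
          rw [sum_range_succ _ (m + n + 1), hB, qBinom_eq_zero_of_lt _ (m + n).lt_succ_self]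
          simp only [mul_zero, add_zero]
        _ = _ := by
          rw [sum_range_succ', hB, qBinom_zero_right, pow_zero, mul_one, mul_one]
    calc qPochhammer x (x * y) m * qPochhammer y (x * y) (n + 1)
      _ = (1 + -y * (x * y) ^ n) * ∑ i ∈ range (m + n + 1), thetaTerm x y (i - n) * B i := by
        rw [qPochhammer_succ, ← ih]
        ring
      _ = ∑ i ∈ range (m + n + 1), f (i + 1) * qBinom (x * y) (m + n + 1) (i + 1) + f 0 := by
        rw [add_mul, one_mul, hhigh, hlow, ← add_assoc, ← sum_add_distrib]
        simp only [qBinom_succ_succ, mul_add, hB]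
      _ = _ := by
        rw [← add_assoc m n 1, sum_range_succ' _ (m + n + 1), qBinom_zero_right, mul_one]
        simp only [hf, Nat.cast_add_one]

lemma thetaTerm_eq_zero {x y : R} {M : ℕ} (hx : x ^ M = 0) (hy : y ^ M = 0) {j : ℤ}
    (hj : M ≤ j.natAbs) : thetaTerm x y j = 0 := by
  rcases le_total 0 j with h | h
  · have := le_triangular j
    rw [thetaTerm, pow_eq_zero_of_le (by omega) hx, mul_zero, zero_mul]
  · have := le_triangular (-j)
    rw [thetaTerm, pow_eq_zero_of_le (by omega) hy, mul_zero]

lemma sum_range_sub_natCast {A : Type*} [AddCommMonoid A] (f : ℤ → A) (n : ℕ) :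
    ∑ i ∈ range (n + n + 1), f (i - n) = f (-n) + ∑ r ∈ range n, (f (-r) + f (r + 1)) := by
  have hneg : ∑ i ∈ range (n + 1), f (i - n) = ∑ r ∈ range (n + 1), f (-r) := by
    rw [← sum_range_reflect]
    exact sum_congr rfl fun r hr ↦ congrArg f (by have := mem_range.1 hr; omega)
  have hpos (r : ℕ) : ((n + 1 + r : ℕ) : ℤ) - n = r + 1 := by push_cast; ring
  rw [add_right_comm, sum_range_add]
  simp only [hpos]
  rw [hneg, sum_range_succ, sum_add_distrib, add_comm (∑ r ∈ range n, _) (f _), add_assoc]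

theorem jacobi_tripleProduct_of_pow_eq_zero {x y : R} {M N : ℕ} (hx : x ^ M = 0)
    (hy : y ^ M = 0) (hN : 2 * M ≤ N) :
    qPochhammer x (x * y) N * qPochhammer y (x * y) N * qPochhammer (x * y) (x * y) N =
      ∑ r ∈ range N, (thetaTerm x y (-r) + thetaTerm x y (r + 1)) := by
  have hxy : (x * y) ^ M = 0 := by rw [mul_pow, hx, zero_mul]
  have hterm (i : ℕ) : thetaTerm x y (i - N) * qBinom (x * y) (N + N) i *
      qPochhammer (x * y) (x * y) N = thetaTerm x y (i - N) := by
    rcases le_or_gt M ((i : ℤ) - N).natAbs with h | h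
    · rw [thetaTerm_eq_zero hx hy h, zero_mul, zero_mul]
    · rw [mul_assoc, qBinom_mul_qPochhammer_of_pow_eq_zero hxy (by omega) (by omega) (by omega),
        mul_one]
  rw [jacobi_tripleProduct_finite, sum_mul, sum_congr rfl fun i _ ↦ hterm i,
    sum_range_sub_natCast, thetaTerm_eq_zero hx hy (by omega), zero_add]

/-- The number `r (5 r + 1) / 2`, an exponent in Ramanujan's alternating series. -/
def quinticExp (r : ℕ) : ℕ := ∑ s ∈ range r, (5 * s + 3)

lemma quinticExp_succ (r : ℕ) : quinticExp (r + 1) = quinticExp r + (5 * r + 3) :=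
  sum_range_succ _ _

lemma two_mul_quinticExp (r : ℕ) : 2 * quinticExp r = r * (5 * r + 1) := by
  induction r with
  | zero => rfl
  | succ r ih => rw [quinticExp_succ, mul_add, ih]; ring

lemma le_quinticExp (r : ℕ) : r ≤ quinticExp r := by
  have := two_mul_quinticExp r
  nlinarith

/-- The series `(q; q)_∞ H_m(q ^ (k + 1))` truncated to `L` terms, for the auxiliary functions
`H_0 = 0`, `H_1` and `H_2` of the Rogers–Ramanujan proof in Hardy and Wright, §19.14. It is meant
for `m ≤ 2`, where `2 - m` is not truncated. -/
def ramanujanSum (q : R) (L m k : ℕ) : R :=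
  ∑ r ∈ range L, (-1) ^ r * q ^ (2 * k * r + quinticExp r + (2 - m) * r) *
    (1 - q ^ (m * (k + 1 + 2 * r))) * qPochhammer (q ^ (r + 1)) q k

lemma ramanujanSum_succ (q : R) (L k : ℕ) {i j : ℕ} (hij : i + j = 1) :
    ramanujanSum q L (i + 1) k = ramanujanSum q L i k + q ^ (i * (k + 1)) *
      ramanujanSum q L (j + 1) (k + 1) - (-1) ^ L * q ^ (2 * k * L + quinticExp L + j * L) *
        (1 - q ^ L) * qPochhammer (q ^ (L + 1)) q k := by
  induction L with
  | zero => simp [ramanujanSum]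
  | succ L ih =>
    -- Splitting off either end of `(q ^ (L + 1); q)_(k + 1)` makes the sum telescope.
    have h₁ := qPochhammer_succ (q ^ (L + 1)) q k
    have h₂ := qPochhammer_succ' (q ^ (L + 1)) q k
    rw [← pow_succ] at h₂
    unfold ramanujanSum at ih ⊢
    rw [sum_range_succ, sum_range_succ, sum_range_succ, ih]
    obtain ⟨rfl, rfl⟩ | ⟨rfl, rfl⟩ : i = 0 ∧ j = 1 ∨ i = 1 ∧ j = 0 := by omega
    · rw [quinticExp_succ]
      linear_combination (-(-1) ^ L * q ^ (2 * k * L + quinticExp L + 2 * L)) * h₁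
        + (-1) ^ L * q ^ (2 * k * L + quinticExp L + 2 * k + 6 * L + 4) * h₂
    · rw [quinticExp_succ]
      linear_combination (-(-1) ^ L * q ^ (2 * k * L + quinticExp L + 3 * L + k + 1)) * h₁
        + (-1) ^ L * q ^ (2 * k * L + quinticExp L + 2 * k + 5 * L + 3) * h₂

lemma ramanujanSum_one {q : R} {M L : ℕ} (hq : q ^ M = 0) (hL : M ≤ L) (k : ℕ) :
    ramanujanSum q L 1 k = ramanujanSum q L 2 (k + 1) := by
  have hzero : ramanujanSum q L 0 k = 0 := sum_eq_zero fun r _ ↦ by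
    rw [zero_mul, pow_zero, sub_self, mul_zero, zero_mul]
  have h := ramanujanSum_succ q L k (zero_add 1)
  rw [pow_eq_zero_of_le (n := 2 * k * L + _ + _) (by omega) hq, hzero] at h
  simpa using h

lemma ramanujanSum_two {q : R} {M L : ℕ} (hq : q ^ M = 0) (hL : M ≤ L) (k : ℕ) :
    ramanujanSum q L 2 k =
      ramanujanSum q L 2 (k + 1) + q ^ (k + 1) * ramanujanSum q L 2 (k + 2) := by
  have := le_quinticExp L
  have h := ramanujanSum_succ q L k (add_zero 1)
  rw [pow_eq_zero_of_le (n := 2 * k * L + _ + _) (by omega) hq, zero_add,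
    ramanujanSum_one hq hL, ramanujanSum_one hq hL] at h
  simpa using h

lemma ramanujanSum_two_of_le {q : R} {M L k : ℕ} (hq : q ^ M = 0) (hL : 0 < L) (hk : M ≤ k) :
    ramanujanSum q L 2 k = qPochhammer q q M := by
  rw [ramanujanSum, sum_eq_single_of_mem 0 (mem_range.2 hL),
    pow_eq_zero_of_le (n := 2 * _) (by omega) hq, ← qPochhammer_self_eq_of_pow_eq_zero hq hk]
  · simp [quinticExp]
  · intro r _ hr
    have : k ≤ k * r := Nat.le_mul_of_pos_right k (Nat.pos_of_ne_zero hr)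
    rw [pow_eq_zero_of_le (m := M) (by nlinarith) hq, mul_zero, zero_mul, zero_mul]

lemma eq_of_eq_add_mul {A : Type*} [Add A] [Mul A] {c f g : ℕ → A} {M : ℕ}
    (hf : ∀ k, f k = f (k + 1) + c k * f (k + 2))
    (hg : ∀ k, g k = g (k + 1) + c k * g (k + 2)) (hfg : ∀ k, M ≤ k → f k = g k) (k : ℕ) :
    f k = g k := by
  suffices h : ∀ j k, M ≤ k + j → f k = g k from h M k (Nat.le_add_left M k)
  intro j
  induction j with
  | zero => exact hfg
  | succ j ih =>
    intro k hk
    rw [hf, hg, ih (k + 1) (by omega), ih (k + 2) (by omega)]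

lemma ramanujanSum_two_eq_mul {q : R} {M L : ℕ} (hq : q ^ M = 0) (hL : M < L) {S : ℕ → R}
    (hS : ∀ k, S k = S (k + 1) + q ^ (k + 1) * S (k + 2)) (hS' : ∀ k, M ≤ k → S k = 1) (k : ℕ) :
    ramanujanSum q L 2 k = qPochhammer q q M * S k := by
  refine eq_of_eq_add_mul (M := M) (g := fun k ↦ qPochhammer q q M * S k)
    (ramanujanSum_two hq hL.le) (fun k ↦ ?_) (fun k hk ↦ ?_) k
  · rw [hS]
    ring
  · rw [ramanujanSum_two_of_le hq (Nat.zero_lt_of_lt hL) hk, hS' k hk, mul_one]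

lemma thetaTerm_neg_add_thetaTerm (q : R) (r : ℕ) :
    thetaTerm q (q ^ 4) (-r) + thetaTerm q (q ^ 4) (r + 1) =
      (-1) ^ r * q ^ (quinticExp r + r) * (1 - q ^ (2 * r + 1)) := by
  have hquintic := two_mul_quinticExp r
  have hneg : triangular (-r) + 4 * triangular r = quinticExp r + r := by
    have := two_mul_triangular r
    have := two_mul_triangular (-r)
    zify at *
    linarith
  have hpos : triangular (r + 1) + 4 * triangular (-(r + 1)) =
      quinticExp r + r + (2 * r + 1) := by
    have := two_mul_triangular (r + 1)
    have := two_mul_triangular (-(r + 1))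
    zify at *
    linarith
  have hnatAbs : ((r : ℤ) + 1).natAbs = r + 1 := by omega
  rw [thetaTerm, thetaTerm, ← pow_mul, ← pow_mul, neg_neg, mul_assoc, mul_assoc, ← pow_add,
    ← pow_add, hneg, hpos, Int.natAbs_neg, Int.natAbs_natCast, hnatAbs]
  ring

lemma qPochhammer_mul_mul_eq_ramanujanSum {q : R} {M N : ℕ} (hq : q ^ M = 0) (hN : 2 * M ≤ N) :
    qPochhammer q (q ^ 5) N * qPochhammer (q ^ 4) (q ^ 5) N * qPochhammer (q ^ 5) (q ^ 5) N =
      ramanujanSum q N 1 0 := by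
  have h := jacobi_tripleProduct_of_pow_eq_zero hq
    (show (q ^ 4) ^ M = 0 by rw [pow_right_comm, hq, zero_pow four_ne_zero]) hN
  rw [← pow_succ'] at h
  rw [h, ramanujanSum]
  refine sum_congr rfl fun r _ ↦ ?_
  rw [thetaTerm_neg_add_thetaTerm, qPochhammer_zero]
  ring

/-- The sequence `S k` stands for `∑ n, q ^ (n ^ 2 + k n) / (q; q)_n`. -/
theorem second_identity_of_pow_eq_zero {q : R} {M N : ℕ} (hq : q ^ M = 0)
    (hN : 2 * M < N) {S : ℕ → R} (hS : ∀ k, S k = S (k + 1) + q ^ (k + 1) * S (k + 2))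
    (hS' : ∀ k, M ≤ k → S k = 1) :
    S 1 * (qPochhammer (q ^ 2) (q ^ 5) N * qPochhammer (q ^ 3) (q ^ 5) N) = 1 := by
  have hsum : qPochhammer q q M * S 1 = qPochhammer q (q ^ 5) N * qPochhammer (q ^ 4) (q ^ 5) N *
      qPochhammer (q ^ 5) (q ^ 5) N := by
    rw [qPochhammer_mul_mul_eq_ramanujanSum hq hN.le, ramanujanSum_one hq (by omega),
      ramanujanSum_two_eq_mul hq (by omega) hS hS']
  have hprod : qPochhammer q q M = ∏ i ∈ range 5, qPochhammer (q ^ (i + 1)) (q ^ 5) N := by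
    rw [← qPochhammer_self_eq_of_pow_eq_zero hq (show M ≤ 5 * N by omega), qPochhammer_mul]
    simp only [pow_succ']
  simp only [prod_range_succ, prod_range_zero, one_mul, zero_add, Nat.reduceAdd, pow_one] at hprod
  have hunit : IsUnit (qPochhammer q q M) := isUnit_qPochhammer ⟨M, hq⟩ q M
  apply hunit.mul_left_cancel
  linear_combination (qPochhammer (q ^ 2) (q ^ 5) N * qPochhammer (q ^ 3) (q ^ 5) N) * hsum - hprod

end QSeries

section SecondIdentity

lemma prod_one_sub_pow_mod_five {R : Type*} [CommRing R] (q : R) (N : ℕ) :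
    ∏ b ∈ range (5 * N) with b % 5 = 2 ∨ b % 5 = 3, (1 - q ^ b) =
      qPochhammer (q ^ 2) (q ^ 5) N * qPochhammer (q ^ 3) (q ^ 5) N := by
  rw [prod_filter]
  induction N with
  | zero => simp
  | succ N ih =>
    have hblock : ∏ i ∈ range 5,
        (if (5 * N + i) % 5 = 2 ∨ (5 * N + i) % 5 = 3 then 1 - q ^ (5 * N + i) else 1) =
        (1 - q ^ (5 * N + 2)) * (1 - q ^ (5 * N + 3)) := by
      simp [prod_range_succ]
    rw [mul_add_one, prod_range_add, ih, hblock, qPochhammer_succ, qPochhammer_succ]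
    ring

lemma mem_congParts_two_three {x : ℕ} : x ∈ congParts 2 3 ↔ x % 5 = 2 ∨ x % 5 = 3 := by
  simp only [congParts, Set.mem_ofPred_eq, Nat.ModEq]
  omega

lemma X_pow_dvd_rhoSeries_mul_qPochhammer_sub_one (N : ℕ) :
    X ^ (5 * N) ∣ rhoSeries (congParts 2 3) *
      (qPochhammer (X ^ 2) (X ^ 5) N * qPochhammer (X ^ 3) (X ^ 5) N) - 1 := by
  rw [← prod_one_sub_pow_mod_five, rhoSeries_mul_prod_one_sub_X_pow]
  · refine X_pow_dvd_rhoSeries_sub_one fun x hx _ ↦ ?_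
    by_contra! hxN
    exact hx.2 (mem_coe.2 (mem_filter.2 ⟨mem_range.2 hxN, mem_congParts_two_three.1 hx.1⟩))
  · intro b hb
    have hb' := (mem_filter.1 hb).2
    exact ⟨by omega, mem_congParts_two_three.2 hb'⟩

theorem second_identity :
    rhoSeries (congParts 2 3) = partitionSeries (HasGaps 2 2) := by
  suffices h : ∀ M, X ^ M ∣ rhoSeries (congParts 2 3) - partitionSeries (HasGaps 2 2) by
    refine sub_eq_zero.1 (PowerSeries.ext fun n ↦ ?_)
    rw [X_pow_dvd_iff.1 (h (n + 1)) n n.lt_succ_self, map_zero]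
  intro M
  let π := Ideal.Quotient.mk (Ideal.span {(X : ℤ⟦X⟧) ^ M})
  have hπ {f g : ℤ⟦X⟧} : π f = π g ↔ X ^ M ∣ f - g := by
    rw [Ideal.Quotient.eq, Ideal.mem_span_singleton]
  obtain ⟨N, hN⟩ : ∃ N, 2 * M < N := ⟨_, Nat.lt_succ_self _⟩
  let P := qPochhammer (X ^ 2 : ℤ⟦X⟧) (X ^ 5) N * qPochhammer (X ^ 3) (X ^ 5) N
  have hgap : π (partitionSeries (HasGaps 2 2)) * π P = 1 := by
    have hX : π X ^ M = 0 := by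
      rw [← map_pow, Ideal.Quotient.eq_zero_iff_mem]
      exact Ideal.mem_span_singleton_self _
    have := second_identity_of_pow_eq_zero
      (S := fun k ↦ π (partitionSeries (HasGaps 2 (k + 1)))) hX hN (fun k ↦ ?_)
      (fun k hk ↦ ?_)
    · simpa only [P, map_mul, map_qPochhammer, map_pow] using this
    · rw [partitionSeries_hasGaps_eq_add 2 k.succ_pos, map_add, map_mul, map_pow]
    · rw [← map_one π, hπ]
      exact X_pow_dvd_partitionSeries_hasGaps_sub_one 2 (by omega)
  have hcong : π (rhoSeries (congParts 2 3)) * π P = 1 := by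
    rw [← map_mul, ← map_one π, hπ]
    exact (pow_dvd_pow X (by omega)).trans (X_pow_dvd_rhoSeries_mul_qPochhammer_sub_one N)
  rw [← hπ]
  exact (IsUnit.of_mul_eq_one_right _ hgap).mul_right_cancel (hcong.trans hgap.symm)

lemma rhoSeries_congParts_sdiff_add :
    rhoSeries (congParts 2 3 \ {2}) + X ^ 2 * partitionSeries (HasGaps 2 2) =
      partitionSeries (HasGaps 2 3) + X ^ 2 * partitionSeries (HasGaps 2 4) := by
  have hrho := rhoSeries_mul_one_sub_X_pow two_pos (mem_congParts_two_three.2 (Or.inl rfl))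
  have hgap := partitionSeries_hasGaps_eq_add 2 two_pos
  rw [← hrho, second_identity]
  linear_combination hgap

end SecondIdentity

end RogersRamanujan

theorem stmt11 (n : ℕ) (hn : 1 ≤ n) :
    congMinusCount 2 3 n ≤ gapCount 2 3 n := by
  have h := congrArg (PowerSeries.coeff n) RogersRamanujan.rhoSeries_congParts_sdiff_add
  simp only [map_add, PowerSeries.coeff_X_pow_mul',
    RogersRamanujan.coeff_partitionSeries_hasGaps] at h
  rw [RogersRamanujan.coeff_rhoSeries_congParts_sdiff 2 3] at h
  have hanti := RogersRamanujan.gapCount_anti 2 (show 2 ≤ 4 by omega) (n - 2)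
  split_ifs at h <;> omega
end
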